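/- arXiv:1011.5666 — 2 statements merged into one kernel-verified Lean document; each statement's English description precedes it below -/
import Mathlib

section
/- Let K ⊆ ℝ^n be a convex body, s ∈ ℝ^n, and δ ≥ 1. Let T ⊆ ℝ^n be a convex body with (√n/δ)·E_{f_s} ⊆ T ⊆ δ√n·E_{f_s}, where E_{f_s} is the inertial ellipsoid of f_s. Then N(T,K) ≤ (12δ²)^n · vol(√n·B₂^n) · (4/3) · L_{f_s}^n, where B₂^n is the Euclidean unit ball of ℝ^n and L_{f_s} is the isotropic constant of f_s. -/
/-!
The isotropic constant and the inertial ellipsoid compare two volumes. Write `S` for the covariance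
of `f = f_s`, `b` for its centroid, `E` for the ellipsoid. Under the probability density `f / ∫ f`
the quadratic form `(x - b)ᵀ S⁻¹ (x - b)` has mean `tr (S⁻¹ S) = n`, so by Markov's inequality
(`markov_volume`) the convex set `M = K ∩ (b + 2√n E)` carries at least `3/4` of the mass, whence
`vol M ≥ (3/4) ∫ f / sup f`. On the other hand `vol (√n E) = vol (√n B) √(det S)`, so that
`vol (√n E) / vol M ≤ (4/3) L_f ^ n vol (√n B)`.

It remains to cover `T` by translates of `M` and count by volume. As `M` need not be symmetric, one
chooses a point reflection of `M` meeting it in volume at least `2⁻ⁿ vol M` (`exists_reflection`);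
with `D` the centred half of this intersection, `D - D` lies in a translate of `M` and
`D ⊆ (M - M) / 4 ⊆ √n E`. A maximal packing of translates of `D` centred in `T ⊆ δ√n E` lies in
`(δ + 1) √n E`, so at most `4ⁿ (δ + 1)ⁿ vol (√n E) / vol M` translates of `M` suffice
(`exists_cover`), and `4 (δ + 1) ≤ 12 δ²`.
-/

open MeasureTheory Pointwise
open scoped ENNReal RealInnerProductSpace

noncomputable section

abbrev Euc (n : ℕ) := EuclideanSpace ℝ (Fin n)

/-- A convex body: a compact convex set with nonempty interior. -/
def IsConvexBody {n : ℕ} (K : Set (Euc n)) : Prop :=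
  Convex ℝ K ∧ IsCompact K ∧ (interior K).Nonempty

/-- The covering number `N(K,T)`: the least cardinality of a finite set `Λ`
with `K ⊆ Λ + T`.  It is `⊤` if no finite cover exists. -/
def coveringNumber {n : ℕ} (K T : Set (Euc n)) : ℕ∞ :=
  sInf {m : ℕ∞ | ∃ Λ : Finset (Euc n), (Λ.card : ℕ∞) = m ∧ K ⊆ ↑Λ + T}

/-- The centroid (barycenter) of a set `K`. -/
def centroid {n : ℕ} (K : Set (Euc n)) : Euc n :=
  (volume K).toReal⁻¹ • ∫ x in K, x

/-- The exponential reweighting `f_s` of the uniform density on `K`: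
`f_s(x) = exp ⟨s,x⟩` on `K` and `0` elsewhere. -/
def expWeight {n : ℕ} (K : Set (Euc n)) (s : Euc n) (x : Euc n) : ℝ :=
  Set.indicator K (fun y => Real.exp ⟪s, y⟫) x

/-- The centroid (barycenter) of a density `f`. -/
def funCentroid {n : ℕ} (f : Euc n → ℝ) : Euc n :=
  (∫ x, f x)⁻¹ • ∫ x, f x • x

/-- The covariance matrix of a density `f`. -/
def funCov {n : ℕ} (f : Euc n → ℝ) : Matrix (Fin n) (Fin n) ℝ :=
  Matrix.of ((∫ x, f x)⁻¹ •
    ∫ x, fun i j => f x * ((x i - funCentroid f i) * (x j - funCentroid f j)))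

/-- The inertial ellipsoid of a density `f`. -/
def funEllipsoid {n : ℕ} (f : Euc n → ℝ) : Set (Euc n) :=
  {x | ∑ i, ∑ j, x i * (funCov f)⁻¹ i j * x j ≤ 1}

/-- The isotropic constant of a density `f` in dimension `n`. -/
def isotropicConstant {n : ℕ} (f : Euc n → ℝ) : ℝ :=
  ((⨆ x, f x) / ∫ x, f x) ^ ((n : ℝ)⁻¹) * (funCov f).det ^ ((2 * (n : ℝ))⁻¹)

/-! ### Covering by translates of a convex set -/

/-- Volume bound for coverings: a maximal family of disjoint translates `x + D`, `x ∈ T`, has at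
most `vol W / vol D` members when `T + D ⊆ W`, and its centres cover `T` by translates
of `D - D`. -/
lemma exists_cover_sub {n : ℕ} {T D W : Set (Euc n)} (hD : MeasurableSet D)
    (hD0 : volume D ≠ 0) (hW : volume W ≠ ∞) (hTW : T + D ⊆ W) :
    ∃ Λ : Finset (Euc n), T ⊆ ↑Λ + (D - D) ∧ (Λ.card : ℝ≥0∞) * volume D ≤ volume W := by
  classical
  let P : Finset (Euc n) → Prop := fun Λ =>
    (↑Λ ⊆ T) ∧ (↑Λ : Set (Euc n)).PairwiseDisjoint (fun x => x +ᵥ D)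
  have hcard : ∀ Λ, P Λ → (Λ.card : ℝ≥0∞) * volume D ≤ volume W := by
    intro Λ hΛ
    have h1 : volume (⋃ x ∈ Λ, x +ᵥ D) = ∑ x ∈ Λ, volume (x +ᵥ D) :=
      measure_biUnion_finset hΛ.2 (fun x _ => hD.const_vadd x)
    have h2 : ∑ x ∈ Λ, volume (x +ᵥ D) = (Λ.card : ℝ≥0∞) * volume D := by
      simp [measure_vadd]
    rw [← h2, ← h1]
    refine measure_mono (Set.iUnion₂_subset fun x hx => ?_)
    rintro _ ⟨d, hd, rfl⟩
    exact hTW (Set.add_mem_add (hΛ.1 hx) hd)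
  obtain ⟨N, hN⟩ := ENNReal.exists_nat_gt (ENNReal.div_lt_top hW hD0).ne
  have hbd : ∀ Λ, P Λ → Λ.card ≤ N := by
    intro Λ hΛ
    have h := ENNReal.le_div_iff_mul_le (Or.inl hD0) (Or.inr hW) |>.2 (hcard Λ hΛ)
    exact_mod_cast (h.trans hN.le)
  obtain ⟨Λ, hΛ, hk⟩ := Nat.findGreatest_spec (P := fun k => ∃ Λ, P Λ ∧ Λ.card = k)
    (n := N) (Nat.zero_le _) ⟨∅, by simp [P], rfl⟩
  refine ⟨Λ, ?_, hcard Λ hΛ⟩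
  have key : ∀ t ∈ T, ∃ x ∈ Λ, ¬ Disjoint (x +ᵥ D) (t +ᵥ D) := by
    intro t ht
    by_contra! hcon
    have hDne : D.Nonempty := nonempty_of_measure_ne_zero hD0
    have htΛ : t ∉ Λ := by
      intro h
      obtain ⟨d, hd⟩ := hDne
      exact Set.disjoint_left.1 (hcon t h) ⟨d, hd, rfl⟩ ⟨d, hd, rfl⟩
    have hP : P (insert t Λ) := by
      refine ⟨?_, ?_⟩
      · rw [Finset.coe_insert]
        exact Set.insert_subset ht hΛ.1
      · rw [Finset.coe_insert]
        exact hΛ.2.insert fun x hx _ => (hcon x hx).symm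
    have h1 := Nat.le_findGreatest (P := fun k => ∃ Λ, P Λ ∧ Λ.card = k) (hbd _ hP)
      ⟨_, hP, rfl⟩
    rw [Finset.card_insert_of_notMem htΛ, ← hk] at h1
    omega
  intro t ht
  obtain ⟨x, hx, hnd⟩ := key t ht
  obtain ⟨z, ⟨d, hd, h1⟩, ⟨e, he, h2⟩⟩ := Set.not_disjoint_iff.1 hnd
  refine ⟨x, hx, d - e, Set.sub_mem_sub hd he, ?_⟩
  simp only [vadd_eq_add] at h1 h2
  have : x + d = t + e := h1.trans h2.symm
  change x + (d - e) = t
  rw [← add_sub_assoc, this, add_sub_cancel_right]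

/-- A convex compact set of positive volume meets one of its point reflections in at least a
`2⁻ⁿ` fraction of its volume: `y ↦ vol (M ∩ (y - M))` has total integral `vol(M)²` and vanishes
off `2M`, so it is at least its average over `2M` somewhere. -/
lemma exists_reflection {n : ℕ} {M : Set (Euc n)} (hc : Convex ℝ M) (hM : IsCompact M)
    (h0 : volume M ≠ 0) :
    ∃ y : Euc n, volume M ≤ 2 ^ n * volume {x | x ∈ M ∧ y - x ∈ M} := by
  have hfin : volume M ≠ ∞ := hM.measure_lt_top.ne
  have hmeas : MeasurableSet M := hM.isClosed.measurableSet
  let g : Euc n → ℝ≥0∞ := fun y => volume {x | x ∈ M ∧ y - x ∈ M}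
  have hset : ∀ y : Euc n, MeasurableSet {x | x ∈ M ∧ y - x ∈ M} := fun y =>
    hmeas.inter ((measurable_const.sub measurable_id) hmeas)
  have hint : ∫⁻ y, g y = volume M * volume M := by
    have e1 : ∀ y, g y = ∫⁻ x, M.indicator 1 x * M.indicator 1 (y - x) := by
      intro y
      rw [show g y = volume {x | x ∈ M ∧ y - x ∈ M} from rfl, ← lintegral_indicator_one (hset y)]
      refine lintegral_congr fun x => ?_
      by_cases h1 : x ∈ M <;> by_cases h2 : y - x ∈ M <;> simp [Set.indicator, h1, h2]
    have hi : Measurable (M.indicator (1 : Euc n → ℝ≥0∞)) := measurable_one.indicator hmeas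
    simp_rw [e1]
    rw [lintegral_lintegral_swap]
    · have e2 : ∀ x : Euc n, ∫⁻ y, M.indicator (1 : Euc n → ℝ≥0∞) x * M.indicator 1 (y - x)
          = M.indicator 1 x * volume M := by
        intro x
        rw [lintegral_const_mul (μ := volume) (f := fun y => M.indicator 1 (y - x)) _
            (hi.comp (measurable_id.sub_const x)),
          lintegral_sub_right_eq_self (fun y => M.indicator (1 : Euc n → ℝ≥0∞) y) x,
          lintegral_indicator_one hmeas]
      simp_rw [e2]
      rw [lintegral_mul_const _ hi, lintegral_indicator_one hmeas]
    · exact ((hi.comp measurable_snd).mul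
        (hi.comp (measurable_fst.sub measurable_snd))).aemeasurable
  have hsupp : ∫⁻ y in (2 : ℝ) • M, g y = ∫⁻ y, g y := by
    apply setLIntegral_eq_of_support_subset
    intro y hy
    obtain ⟨x, hx, hyx⟩ := nonempty_of_measure_ne_zero hy
    refine ⟨(1 / 2 : ℝ) • x + (1 / 2 : ℝ) • (y - x),
      hc hx hyx (by norm_num) (by norm_num) (by norm_num), ?_⟩
    simp only [← smul_add, add_sub_cancel, smul_smul]
    norm_num
  have hvol : volume ((2 : ℝ) • M) = 2 ^ n * volume M := by
    rw [Measure.addHaar_smul]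
    simp [abs_of_nonneg, ENNReal.ofReal_pow]
  obtain ⟨y, -, hy⟩ := exists_setLAverage_le (μ := volume) (s := (2 : ℝ) • M) (f := g)
    (by rw [hvol]; simp [h0])
    (hM.smul (2 : ℝ)).isClosed.measurableSet.nullMeasurableSet
    (by rw [hsupp, hint]; exact ENNReal.mul_ne_top hfin hfin)
  refine ⟨y, ?_⟩
  rw [setLAverage_eq, hsupp, hint, hvol] at hy
  have h2 : (2 : ℝ≥0∞) ^ n * volume M ≠ 0 := by simp [h0]
  have h3 : (2 : ℝ≥0∞) ^ n * volume M ≠ ∞ := ENNReal.mul_ne_top (by simp) hfin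
  rw [ENNReal.div_le_iff h2 h3] at hy
  have hy' : volume M * volume M ≤ (2 ^ n * g y) * volume M := by
    calc _ ≤ _ := hy
      _ = _ := by ring
  exact (ENNReal.mul_le_mul_iff_left h0 hfin).1 hy'

/-- Covering by translates of a convex compact `M`, not assumed symmetric. One passes to a large
symmetric subset of `M`, whose halves have difference set inside a translate of `M`. -/
lemma exists_cover {n : ℕ} {M T W : Set (Euc n)} (hc : Convex ℝ M) (hM : IsCompact M)
    (h0 : volume M ≠ 0) (hW : volume W ≠ ∞)
    (hTW : ∀ t ∈ T, ∀ a ∈ M, ∀ b ∈ M, t + (1 / 4 : ℝ) • (a - b) ∈ W) :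
    ∃ Λ : Finset (Euc n), T ⊆ ↑Λ + M ∧ (Λ.card : ℝ≥0∞) * volume M ≤ 4 ^ n * volume W := by
  classical
  obtain ⟨y, hy⟩ := exists_reflection hc hM h0
  set C : Set (Euc n) := {x | x ∈ M ∧ y - x ∈ M} with hC
  have hCm : MeasurableSet C := hM.isClosed.measurableSet.inter
    ((measurable_const.sub measurable_id) hM.isClosed.measurableSet)
  set D : Set (Euc n) := (1 / 2 : ℝ) • (-((1 / 2 : ℝ) • y) +ᵥ C) with hDdef
  have hDvol : (2 : ℝ≥0∞) ^ n * volume D = volume C := by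
    rw [hDdef, Measure.addHaar_smul, measure_vadd, ← mul_assoc]
    have : (2 : ℝ≥0∞) ^ n * ENNReal.ofReal |(1 / 2 : ℝ) ^ Module.finrank ℝ (Euc n)| = 1 := by
      rw [finrank_euclideanSpace_fin, abs_of_nonneg (by positivity),
        show (2 : ℝ≥0∞) ^ n = ENNReal.ofReal (2 ^ n) by simp [ENNReal.ofReal_pow],
        ← ENNReal.ofReal_mul (by positivity), ← mul_pow]
      norm_num
    rw [this, one_mul]
  have hD0 : volume D ≠ 0 := by
    intro h
    rw [h, mul_zero] at hDvol
    rw [← hDvol, mul_zero] at hy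
    exact h0 (le_antisymm hy zero_le)
  obtain ⟨Λ, hΛ, hcard⟩ := exists_cover_sub (T := T) (D := D) (W := W)
    ((hCm.const_vadd _).const_smul₀ _) hD0 hW (by
      rintro _ ⟨t, ht, _, ⟨_, ⟨c, hcC, rfl⟩, rfl⟩, rfl⟩
      have := hTW t ht c hcC.1 (y - c) hcC.2
      convert this using 1
      simp only [vadd_eq_add]
      module)
  refine ⟨Λ.image (fun x => x - (1 / 2 : ℝ) • y), ?_, ?_⟩
  · intro t ht
    obtain ⟨x, hx, _, ⟨_, ⟨_, ⟨c, hcC, rfl⟩, rfl⟩, _, ⟨_, ⟨e, heC, rfl⟩, rfl⟩, rfl⟩, rfl⟩ := hΛ ht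
    refine ⟨x - (1 / 2 : ℝ) • y, Finset.mem_coe.2 (Finset.mem_image_of_mem _ hx),
      (1 / 2 : ℝ) • c + (1 / 2 : ℝ) • (y - e),
      hc hcC.1 heC.2 (by norm_num) (by norm_num) (by norm_num), ?_⟩
    simp only [vadd_eq_add]
    module
  · calc ((Λ.image (fun x => x - (1 / 2 : ℝ) • y)).card : ℝ≥0∞) * volume M
        ≤ Λ.card * (2 ^ n * volume C) := by
          exact mul_le_mul' (Nat.cast_le.2 Finset.card_image_le) hy
      _ = 4 ^ n * (Λ.card * volume D) := by
          rw [← hDvol, show (4 : ℝ≥0∞) = 2 * 2 by norm_num, mul_pow]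
          ring
      _ ≤ 4 ^ n * volume W := by gcongr

/-! ### The weighted density and its covariance -/

lemma expWeight_nonneg {n : ℕ} (K : Set (Euc n)) (s x : Euc n) : 0 ≤ expWeight K s x :=
  Set.indicator_nonneg (fun _ _ => (Real.exp_pos _).le) x

lemma expWeight_pos {n : ℕ} {K : Set (Euc n)} (s : Euc n) {x : Euc n} (hx : x ∈ K) :
    0 < expWeight K s x := by
  rw [expWeight, Set.indicator_of_mem hx]
  exact Real.exp_pos _

lemma expWeight_integrable_mul {n : ℕ} {K : Set (Euc n)} (hK : IsCompact K) (s : Euc n)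
    {g : Euc n → ℝ} (hg : Continuous g) : Integrable (fun x => expWeight K s x * g x) := by
  have h : (fun x => expWeight K s x * g x) =
      K.indicator (fun x => Real.exp ⟪s, x⟫ * g x) := by
    ext x
    by_cases hx : x ∈ K <;> simp [expWeight, hx]
  rw [h, integrable_indicator_iff hK.isClosed.measurableSet]
  exact ContinuousOn.integrableOn_compact hK (by fun_prop)

lemma expWeight_bddAbove {n : ℕ} {K : Set (Euc n)} (hK : IsCompact K) (s : Euc n) :
    BddAbove (Set.range (expWeight K s)) := by
  obtain ⟨c, hc⟩ := hK.bddAbove_image (f := fun y => Real.exp ⟪s, y⟫) (by fun_prop)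
  refine ⟨max c 0, ?_⟩
  rintro _ ⟨x, rfl⟩
  by_cases hx : x ∈ K
  · exact le_max_of_le_left (by
      rw [expWeight, Set.indicator_of_mem hx]
      exact hc ⟨x, hx, rfl⟩)
  · simp [expWeight, hx]

lemma expWeight_integral_mul_pos {n : ℕ} {K : Set (Euc n)} (hK : IsConvexBody K) (s : Euc n)
    {g : Euc n → ℝ} (hg : Continuous g) (hg0 : ∀ x, 0 ≤ g x) (hx : ∃ x ∈ interior K, g x ≠ 0) :
    0 < ∫ x, expWeight K s x * g x := by
  rw [integral_pos_iff_support_of_nonneg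
    (fun x => mul_nonneg (expWeight_nonneg K s x) (hg0 x))
    (expWeight_integrable_mul hK.2.1 s hg)]
  have ho : IsOpen (interior K ∩ {x | g x ≠ 0}) :=
    isOpen_interior.inter (isOpen_ne_fun hg continuous_const)
  obtain ⟨x, hx, hgx⟩ := hx
  refine (ho.measure_pos volume ⟨x, hx, hgx⟩).trans_le (measure_mono ?_)
  rintro z ⟨hz, hgz⟩
  exact mul_ne_zero (expWeight_pos s (interior_subset hz)).ne' hgz

lemma expWeight_integral_pos {n : ℕ} {K : Set (Euc n)} (hK : IsConvexBody K) (s : Euc n) :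
    0 < ∫ x, expWeight K s x := by
  obtain ⟨x, hx⟩ := hK.2.2
  simpa using expWeight_integral_mul_pos hK s (g := fun _ => 1) continuous_const
    (fun _ => zero_le_one) ⟨x, hx, one_ne_zero⟩

lemma funCov_expWeight_apply {n : ℕ} {K : Set (Euc n)} (hK : IsConvexBody K) (s : Euc n)
    (i j : Fin n) :
    funCov (expWeight K s) i j = (∫ x, expWeight K s x)⁻¹ *
      ∫ x, expWeight K s x * ((x i - funCentroid (expWeight K s) i) *
        (x j - funCentroid (expWeight K s) j)) := by
  have hI : ∀ i j : Fin n, Integrable (fun x => expWeight K s x *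
      ((x i - funCentroid (expWeight K s) i) * (x j - funCentroid (expWeight K s) j))) :=
    fun i j => expWeight_integrable_mul hK.2.1 s (by fun_prop)
  rw [funCov, Matrix.of_apply, Pi.smul_apply, Pi.smul_apply, smul_eq_mul,
    eval_integral (fun i => Integrable.of_eval fun j => hI i j), eval_integral (fun j => hI i j)]

/-- Second moments of linear combinations are read off the covariance matrix. -/
lemma integral_quadratic {n : ℕ} {K : Set (Euc n)} (hK : IsConvexBody K) (s : Euc n)
    (A : Matrix (Fin n) (Fin n) ℝ) :
    ∫ x, expWeight K s x * ∑ i, ∑ j, (x i - funCentroid (expWeight K s) i) * A i j *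
        (x j - funCentroid (expWeight K s) j) =
      (∫ x, expWeight K s x) * ∑ i, ∑ j, A i j * funCov (expWeight K s) i j := by
  set b := funCentroid (expWeight K s) with hb
  have hI : ∀ i j : Fin n, Integrable (fun x => A i j *
      (expWeight K s x * ((x i - b i) * (x j - b j)))) :=
    fun i j => (expWeight_integrable_mul hK.2.1 s (by fun_prop)).const_mul _
  have e : ∀ x : Euc n, expWeight K s x * ∑ i, ∑ j, (x i - b i) * A i j * (x j - b j) =
      ∑ i, ∑ j, A i j * (expWeight K s x * ((x i - b i) * (x j - b j))) := by
    intro x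
    simp_rw [Finset.mul_sum]
    exact Finset.sum_congr rfl fun i _ => Finset.sum_congr rfl fun j _ => by ring
  simp_rw [e]
  rw [integral_finsetSum _ fun i _ => integrable_finsetSum _ fun j _ => hI i j, Finset.mul_sum]
  refine Finset.sum_congr rfl fun i _ => ?_
  rw [integral_finsetSum _ fun j _ => hI i j, Finset.mul_sum]
  refine Finset.sum_congr rfl fun j _ => ?_
  rw [integral_const_mul, funCov_expWeight_apply hK, ← hb]
  have := (expWeight_integral_pos hK s).ne'
  field_simp

lemma funCov_posDef {n : ℕ} {K : Set (Euc n)} (hK : IsConvexBody K) (s : Euc n) :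
    (funCov (expWeight K s)).PosDef := by
  refine Matrix.PosDef.of_dotProduct_mulVec_pos ?_ fun v hv => ?_
  · ext i j
    simp only [Matrix.conjTranspose_apply, star_trivial, funCov_expWeight_apply hK]
    congr 2
    ext x
    ring
  set b := funCentroid (expWeight K s) with hb
  have hI := expWeight_integral_pos hK s
  have h1 := integral_quadratic hK s (Matrix.of fun i j => v i * v j)
  have e : ∀ x : Euc n, ∑ i, ∑ j, (x i - b i) * (Matrix.of fun i j => v i * v j) i j *
      (x j - b j) = (∑ i, v i * (x i - b i)) ^ 2 := by
    intro x
    rw [sq, Finset.sum_mul_sum]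
    exact Finset.sum_congr rfl fun i _ => Finset.sum_congr rfl fun j _ => by
      simp only [Matrix.of_apply]; ring
  simp_rw [← hb, e] at h1
  have h2 : 0 < ∫ x, expWeight K s x * (∑ i, v i * (x i - b i)) ^ 2 := by
    refine expWeight_integral_mul_pos hK s (by fun_prop) (fun x => sq_nonneg _) ?_
    -- a nonzero affine function is not identically zero on the interior of `K`
    by_contra! hcon
    obtain ⟨x, hx⟩ := hK.2.2
    have hcont : Continuous (fun t : ℝ => x + t • WithLp.toLp 2 v) := by fun_prop
    have hnear : ∀ᶠ t in nhds (0 : ℝ), x + t • WithLp.toLp 2 v ∈ interior K :=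
      hcont.continuousAt.eventually_mem (by simpa using isOpen_interior.mem_nhds hx)
    obtain ⟨ε, hε, hball⟩ := Metric.eventually_nhds_iff.1 hnear
    have hy := hball (y := ε / 2) (by
      rw [Real.dist_eq, sub_zero, abs_of_pos (by positivity)]; linarith)
    have z1 := pow_eq_zero_iff (two_ne_zero) |>.1 (hcon x hx)
    have z2 := pow_eq_zero_iff (two_ne_zero) |>.1 (hcon _ hy)
    have z3 : ∑ i, v i * ((x + (ε / 2) • WithLp.toLp 2 v) i - b i) =
        ∑ i, v i * (x i - b i) + (ε / 2) * ∑ i, v i * v i := by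
      rw [Finset.mul_sum, ← Finset.sum_add_distrib]
      refine Finset.sum_congr rfl fun i _ => ?_
      simp only [PiLp.add_apply, PiLp.smul_apply, smul_eq_mul]
      ring
    rw [z3, z1, zero_add] at z2
    have z4 : ∑ i, v i * v i = 0 := by
      rcases mul_eq_zero.1 z2 with h | h
      · linarith
      · exact h
    refine hv (dotProduct_self_eq_zero.1 z4)
  rw [h1] at h2
  have h3 := pos_of_mul_pos_right h2 hI.le
  convert h3 using 1
  simp only [dotProduct, Matrix.mulVec, star_trivial, Finset.mul_sum, Matrix.of_apply]
  exact Finset.sum_congr rfl fun i _ => Finset.sum_congr rfl fun j _ => by ring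

/-! ### The inertial ellipsoid and the mass it carries -/

/-- A square root of the inverse covariance: a linear map taking the inertial ellipsoid to the
Euclidean unit ball. -/
lemma exists_whitening {n : ℕ} {K : Set (Euc n)} (hK : IsConvexBody K) (s : Euc n) :
    ∃ L : Euc n →ₗ[ℝ] Euc n,
      (∀ x : Euc n, ∑ i, ∑ j, x i * (funCov (expWeight K s))⁻¹ i j * x j = ‖L x‖ ^ 2) ∧
      LinearMap.det L ≠ 0 ∧
      (LinearMap.det L ^ 2)⁻¹ = (funCov (expWeight K s)).det := by
  have hS := funCov_posDef hK s
  obtain ⟨P, hP⟩ : ∃ P : Matrix (Fin n) (Fin n) ℝ,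
      (funCov (expWeight K s))⁻¹ = P.transpose * P := by
    open scoped MatrixOrder in
    obtain ⟨P, hP⟩ := CStarAlgebra.nonneg_iff_eq_star_mul_self.mp hS.inv.posSemidef.nonneg
    exact ⟨P, by rw [hP, Matrix.star_eq_conjTranspose, Matrix.conjTranspose_eq_transpose_of_trivial]⟩
  have hdet : P.det ^ 2 = (funCov (expWeight K s)).det⁻¹ := by
    rw [← Ring.inverse_eq_inv', ← Matrix.det_nonsing_inv, hP, Matrix.det_mul,
      Matrix.det_transpose, sq]
  have hLdet : LinearMap.det (Matrix.toLpLin 2 2 P) = P.det := LinearMap.det_toLpLin 2 P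
  refine ⟨Matrix.toLpLin 2 2 P, fun x => ?_, ?_, ?_⟩
  · rw [hP, EuclideanSpace.real_norm_sq_eq]
    have e1 : ∑ i, ∑ j, x i * (P.transpose * P) i j * x j =
        x.ofLp ⬝ᵥ ((P.transpose * P).mulVec x.ofLp) := by
      simp only [dotProduct, Matrix.mulVec, Finset.mul_sum, mul_assoc]
    rw [e1, ← Matrix.mulVec_mulVec, Matrix.dotProduct_mulVec, Matrix.vecMul_transpose]
    simp only [Matrix.ofLp_toLpLin, Matrix.toLin'_apply, dotProduct, sq]
  · rw [hLdet]
    intro h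
    rw [h] at hdet
    have := hS.det_pos
    have h2 := inv_pos.2 this
    rw [← hdet] at h2
    norm_num at h2
  · rw [hLdet, hdet, inv_inv]

/-- Markov's inequality in integrated form: a `3/4` fraction of the mass of `f_s` lies in the
ellipsoid `b + 2√n E`, and `f_s` is at most its supremum there. -/
lemma markov_volume {n : ℕ} (hn : n ≠ 0) {K : Set (Euc n)} (hK : IsConvexBody K) (s : Euc n)
    (L : Euc n →ₗ[ℝ] Euc n)
    (hL : ∀ x : Euc n, ∑ i, ∑ j, x i * (funCov (expWeight K s))⁻¹ i j * x j = ‖L x‖ ^ 2) :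
    ENNReal.ofReal (3 / 4 * (∫ x, expWeight K s x) / ⨆ x, expWeight K s x) ≤
      volume (K ∩ {x | ‖L (x - funCentroid (expWeight K s))‖ ≤ 2 * Real.sqrt n}) := by
  set f := expWeight K s with hf
  set b := funCentroid f with hb
  set M := K ∩ {x | ‖L (x - b)‖ ≤ 2 * Real.sqrt n} with hM
  have hLc : Continuous L := L.continuous_of_finiteDimensional
  have hMm : MeasurableSet M := hK.2.1.isClosed.measurableSet.inter
    (isClosed_le (by fun_prop) continuous_const).measurableSet
  have hMfin : volume M ≠ ∞ :=
    ((measure_mono Set.inter_subset_left).trans_lt hK.2.1.measure_lt_top).ne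
  have hle : ∀ x, f x ≤ ⨆ x, f x := fun x => le_ciSup (expWeight_bddAbove hK.2.1 s) x
  have hm : 0 < ⨆ x, f x := by
    obtain ⟨x, hx⟩ := hK.2.2
    exact (expWeight_pos s (interior_subset hx)).trans_le (hle x)
  have hn' : (0 : ℝ) < n := by positivity
  have hq : ∫ x, f x * ‖L (x - b)‖ ^ 2 = (∫ x, f x) * n := by
    have h1 := integral_quadratic hK s (funCov f)⁻¹
    have h2 : ∑ i, ∑ j, (funCov f)⁻¹ i j * funCov f i j = n := by
      have hdet : IsUnit (funCov f).det := (funCov_posDef hK s).det_pos.ne'.isUnit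
      have hsymm : ∀ i j, funCov f i j = funCov f j i := fun i j => by
        simpa using (funCov_posDef hK s).1.apply j i
      calc _ = ∑ i, ((funCov f)⁻¹ * funCov f) i i := by
            refine Finset.sum_congr rfl fun i _ => ?_
            rw [Matrix.mul_apply]
            exact Finset.sum_congr rfl fun j _ => by rw [hsymm i j]
        _ = n := by rw [Matrix.nonsing_inv_mul _ hdet]; simp
    rw [← hf, h2] at h1
    rw [← h1]
    refine integral_congr_ae (Filter.Eventually.of_forall fun x => ?_)
    simp only
    rw [← hL (x - b)]
    simp only [PiLp.sub_apply, hb]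
  have hint1 : Integrable f := by
    simpa using expWeight_integrable_mul hK.2.1 s (g := fun _ => 1) continuous_const
  have hint2 : Integrable (fun x => f x * ‖L (x - b)‖ ^ 2) :=
    expWeight_integrable_mul hK.2.1 s (by fun_prop)
  have key : ∫ x, (f x - (4 * (n : ℝ))⁻¹ * (f x * ‖L (x - b)‖ ^ 2)) ≤
      ∫ x, M.indicator (fun _ => ⨆ x, f x) x := by
    refine integral_mono (hint1.sub (hint2.const_mul _))
      ((integrable_indicator_iff hMm).2 (integrableOn_const hMfin)) fun x => ?_
    have hfx : 0 ≤ f x := expWeight_nonneg K s x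
    by_cases hx : x ∈ M
    · simp only [Set.indicator_of_mem hx]
      have : 0 ≤ (4 * (n : ℝ))⁻¹ * (f x * ‖L (x - b)‖ ^ 2) := by positivity
      linarith [hle x]
    · simp only [Set.indicator_of_notMem hx]
      by_cases hxK : x ∈ K
      · have h1 : 2 * Real.sqrt n < ‖L (x - b)‖ := by
          by_contra! h
          exact hx ⟨hxK, h⟩
        have h2 : 4 * (n : ℝ) ≤ ‖L (x - b)‖ ^ 2 := by
          have h3 := pow_le_pow_left₀ (by positivity) h1.le 2
          rw [mul_pow, Real.sq_sqrt hn'.le] at h3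
          linarith
        have h4 : f x ≤ (4 * (n : ℝ))⁻¹ * (f x * ‖L (x - b)‖ ^ 2) := by
          rw [le_inv_mul_iff₀ (by positivity), mul_comm]
          exact mul_le_mul_of_nonneg_left h2 hfx
        linarith
      · have : f x = 0 := by simp [hf, expWeight, hxK]
        simp [this]
  rw [integral_sub hint1 (hint2.const_mul _), integral_const_mul, hq,
    integral_indicator_const _ hMm, smul_eq_mul] at key
  rw [ENNReal.ofReal_le_iff_le_toReal hMfin, div_le_iff₀ hm]
  refine le_trans (le_of_eq ?_) key
  field_simp
  ring

lemma isotropicConstant_pow {n : ℕ} (hn : n ≠ 0) {f : Euc n → ℝ}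
    (h1 : 0 ≤ (⨆ x, f x) / ∫ x, f x) (h2 : 0 ≤ (funCov f).det) :
    isotropicConstant f ^ n = ((⨆ x, f x) / ∫ x, f x) * Real.sqrt (funCov f).det := by
  rw [isotropicConstant, mul_pow, Real.rpow_inv_natCast_pow h1 hn, ← Real.rpow_natCast,
    ← Real.rpow_mul h2, Real.sqrt_eq_rpow]
  congr 2
  have : (n : ℝ) ≠ 0 := by positivity
  field_simp

lemma coveringNumber_le {n : ℕ} {T K : Set (Euc n)} (Λ : Finset (Euc n)) (h : T ⊆ ↑Λ + K) :
    (coveringNumber T K : ℝ≥0∞) ≤ Λ.card := by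
  have h1 : coveringNumber T K ≤ (Λ.card : ℕ∞) := sInf_le ⟨Λ, rfl, h⟩
  exact_mod_cast h1

theorem covering_number_inertial_le_K
    {n : ℕ} (K : Set (Euc n)) (hK : IsConvexBody K) (s : Euc n)
    (δ : ℝ) (hδ : 1 ≤ δ) (T : Set (Euc n)) (hT : IsConvexBody T)
    (hT1 : (Real.sqrt n / δ) • funEllipsoid (expWeight K s) ⊆ T)
    (hT2 : T ⊆ (δ * Real.sqrt n) • funEllipsoid (expWeight K s)) :
    (coveringNumber T K : ℝ≥0∞) ≤
      ENNReal.ofReal ((12 * δ ^ 2) ^ n) *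
        volume (Real.sqrt n • Metric.closedBall (0 : Euc n) 1) *
        ENNReal.ofReal ((4 / 3) * isotropicConstant (expWeight K s) ^ n) := by
  -- the Markov step divides by `n`; in dimension `0` one translate suffices
  rcases eq_or_ne n 0 with rfl | hn
  · obtain ⟨k, hk⟩ := hK.2.2
    have h1 := coveringNumber_le (T := T) (K := K) {0} (fun t _ => by
      refine ⟨0, by simp, k, interior_subset hk, Subsingleton.elim _ _⟩)
    refine h1.trans ?_
    have h2 : (Real.sqrt ((0 : ℕ) : ℝ) • Metric.closedBall (0 : Euc 0) 1) = {0} := by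
      ext x
      simp [Subsingleton.elim x 0, Set.zero_smul_set]
    rw [h2]
    have h3 : volume ({0} : Set (Euc 0)) = 1 := by
      have h4 : ∀ A : Set (Fin 0 → ℝ), A.Nonempty → volume A = 1 := fun A hA => by
        rw [Subsingleton.eq_univ_of_nonempty hA, volume_pi, Measure.pi_univ]
        simp
      rw [← (EuclideanSpace.volume_preserving_symm_measurableEquiv_toLp
        (Fin 0)).symm.measure_preimage_equiv]
      exact h4 _ ⟨0, Subsingleton.elim _ _⟩
    rw [h3]
    simp only [Finset.card_singleton, Nat.cast_one, pow_zero, ENNReal.ofReal_one, mul_one, one_mul]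
    rw [ENNReal.one_le_ofReal]
    norm_num
  obtain ⟨L, hL, hd0, hdet⟩ := exists_whitening hK s
  have hLc : Continuous L := L.continuous_of_finiteDimensional
  have hδ0 : 0 < δ := by linarith
  have hR : 0 < Real.sqrt n := Real.sqrt_pos.2 (by positivity)
  set f := expWeight K s with hf
  set b := funCentroid f with hb
  set M := K ∩ {x | ‖L (x - b)‖ ≤ 2 * Real.sqrt n} with hM
  have hI : 0 < ∫ x, f x := expWeight_integral_pos hK s
  have hm : 0 < ⨆ x, f x := by
    obtain ⟨x, hx⟩ := hK.2.2
    exact (expWeight_pos s (interior_subset hx)).trans_le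
      (le_ciSup (expWeight_bddAbove hK.2.1 s) x)
  have hvolM := markov_volume hn hK s L hL
  have hM0 : volume M ≠ 0 := by
    refine (lt_of_lt_of_le ?_ hvolM).ne'
    rw [ENNReal.ofReal_pos]
    positivity
  have hMc : Convex ℝ M := by
    refine hK.1.inter ?_
    have : {x | ‖L (x - b)‖ ≤ 2 * Real.sqrt n} =
        (fun x => L x) ⁻¹' Metric.closedBall (L b) (2 * Real.sqrt n) := by
      ext x
      simp [dist_eq_norm]
    rw [this]
    exact (convex_closedBall _ _).linear_preimage L
  have hMK : IsCompact M := hK.2.1.inter_right (isClosed_le (by fun_prop) continuous_const)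
  set V := volume (Real.sqrt n • Metric.closedBall (0 : Euc n) 1) with hV
  set W : Set (Euc n) := L ⁻¹' ((δ + 1) • (Real.sqrt n • Metric.closedBall (0 : Euc n) 1)) with hW
  have hVfin : V ≠ ∞ := ((isCompact_closedBall _ _).smul _).measure_lt_top.ne
  have hWvol : volume W = ENNReal.ofReal (|LinearMap.det L|⁻¹ * (δ + 1) ^ n) * V := by
    rw [hW, Measure.addHaar_preimage_linearMap _ hd0, Measure.addHaar_smul, abs_inv,
      finrank_euclideanSpace_fin, abs_of_nonneg (a := (δ + 1) ^ n) (by positivity), ← mul_assoc,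
      ← ENNReal.ofReal_mul (by positivity)]
  have hWmem : ∀ x, ‖L x‖ ≤ (δ + 1) * Real.sqrt n → x ∈ W := by
    intro x hx
    have : (δ + 1) • (Real.sqrt n • Metric.closedBall (0 : Euc n) 1) =
        Metric.closedBall 0 ((δ + 1) * Real.sqrt n) := by
      rw [smul_smul, smul_unitClosedBall, Real.norm_of_nonneg (by positivity)]
    rw [hW, this]
    simpa using hx
  have hTn : ∀ t ∈ T, ‖L t‖ ≤ δ * Real.sqrt n := by
    intro t ht
    obtain ⟨e, he, rfl⟩ := hT2 ht
    have h1 : ‖L e‖ ^ 2 ≤ 1 := by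
      rw [← hL e]
      exact he
    have h2 : ‖L e‖ ≤ 1 := by
      rw [sq_le_one_iff₀ (norm_nonneg _)] at h1
      exact h1
    simp only [map_smul, norm_smul]
    rw [Real.norm_of_nonneg (by positivity)]
    exact mul_le_of_le_one_right (by positivity) h2
  obtain ⟨Λ, hΛ, hcard⟩ := exists_cover (T := T) (W := W) hMc hMK hM0
    (by rw [hWvol]; exact ENNReal.mul_ne_top ENNReal.ofReal_ne_top hVfin) (by
      intro t ht x hx y hy
      apply hWmem
      have e : L (t + (1 / 4 : ℝ) • (x - y)) =
          L t + (1 / 4 : ℝ) • (L (x - b) - L (y - b)) := by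
        simp only [map_add, map_smul, map_sub]
        module
      have hx2 : ‖L (x - b)‖ ≤ 2 * Real.sqrt n := hx.2
      have hy2 : ‖L (y - b)‖ ≤ 2 * Real.sqrt n := hy.2
      calc ‖L (t + (1 / 4 : ℝ) • (x - y))‖
          ≤ ‖L t‖ + ‖(1 / 4 : ℝ) • (L (x - b) - L (y - b))‖ := by rw [e]; exact norm_add_le _ _
        _ ≤ ‖L t‖ + (1 / 4) * (‖L (x - b)‖ + ‖L (y - b)‖) := by
            rw [norm_smul, Real.norm_of_nonneg (by norm_num)]
            gcongr
            exact norm_sub_le _ _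
        _ ≤ (δ + 1) * Real.sqrt n := by linarith [hTn t ht])
  refine (coveringNumber_le Λ (hΛ.trans (Set.add_subset_add_left Set.inter_subset_left))).trans ?_
  have hLn : isotropicConstant f ^ n = ((⨆ x, f x) / ∫ x, f x) * |LinearMap.det L|⁻¹ := by
    rw [isotropicConstant_pow hn (by positivity) (funCov_posDef hK s).det_pos.le, ← hdet,
      Real.sqrt_inv, Real.sqrt_sq_eq_abs]
  rw [hLn]
  have hone : ENNReal.ofReal (3 / 4 * (∫ x, f x) / ⨆ x, f x) *
      ENNReal.ofReal (4 / 3 * ((⨆ x, f x) / ∫ x, f x)) = 1 := by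
    rw [← ENNReal.ofReal_mul (by positivity), ← ENNReal.ofReal_one]
    congr 1
    field_simp
  -- `4 (δ + 1) ≤ 12 δ²` because `δ ≥ 1`
  have hδn : 4 ^ n * (δ + 1) ^ n ≤ (12 * δ ^ 2) ^ n := by
    rw [← mul_pow]
    refine pow_le_pow_left₀ (by positivity) ?_ n
    nlinarith
  calc (Λ.card : ℝ≥0∞)
      = Λ.card * (ENNReal.ofReal (3 / 4 * (∫ x, f x) / ⨆ x, f x) *
          ENNReal.ofReal (4 / 3 * ((⨆ x, f x) / ∫ x, f x))) := by rw [hone, mul_one]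
    _ ≤ Λ.card * (volume M * ENNReal.ofReal (4 / 3 * ((⨆ x, f x) / ∫ x, f x))) := by gcongr
    _ = (Λ.card * volume M) * ENNReal.ofReal (4 / 3 * ((⨆ x, f x) / ∫ x, f x)) := by ring
    _ ≤ (4 ^ n * volume W) * ENNReal.ofReal (4 / 3 * ((⨆ x, f x) / ∫ x, f x)) := by gcongr
    _ = ENNReal.ofReal (4 ^ n * (δ + 1) ^ n) * V *
          ENNReal.ofReal (4 / 3 * ((⨆ x, f x) / (∫ x, f x) * |LinearMap.det L|⁻¹)) := by
        have h4 : (4 : ℝ≥0∞) ^ n = ENNReal.ofReal (4 ^ n) := by simp [ENNReal.ofReal_pow]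
        rw [hWvol, h4, ENNReal.ofReal_mul (p := 4 ^ n) (by positivity),
          ENNReal.ofReal_mul (p := |LinearMap.det L|⁻¹) (by positivity), ← mul_assoc (4 / 3 : ℝ),
          ENNReal.ofReal_mul (p := 4 / 3 * ((⨆ x, f x) / ∫ x, f x)) (by positivity)]
        ring
    _ ≤ _ := by gcongr

end
end

section
/- There exist a constant C > 0 and n₀ ∈ ℕ such that for every n ≥ n₀, every ε > 0, and every convex body K ⊆ ℝ^n whose centroid satisfies b(K) ∈ (1/(n+1))·E_K (where E_K is the inertial ellipsoid of K), the following holds: let S = εn·(conv(K ∪ -K))* ⊆ ℝ^n; then (1/vol(S)) ∫_S L_{f_s}^{2n} ds ≤ (C · e^ε / √ε)^{2n}. -/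
/-!
Write `Λ s = log ∫_K exp ⟨s,x⟩ dx`. Its gradient `expMean K` is the centroid of `f_s`, and the
Jacobian of this gradient is `cov(f_s)`. Since `cov(f_s)` is positive definite, the gradient is
injective; it takes values in `K`. Hence `∫_S det cov(f_s) ds ≤ vol K` for every measurable `S`
(`IsConvexBody.lintegral_det_le`). For `|⟨s,·⟩| ≤ εn` on `K`, restricting the integral to a copy
of `K` shrunk by `1/2` towards a given point gives `sup f_s / ∫ f_s ≤ 2^n exp (εn) / vol K`. So
`∫_S L_{f_s}^{2n} ds ≤ 4^n exp (2εn) / vol K`, and it remains to bound `vol S * vol K` below by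
`(c ε)^n`.

The hypothesis on the centroid gives, by Cauchy–Schwarz for the covariance form, the bound
`|⟨s,·⟩| ≤ 2` on `K` for every `s ∈ (K - K)*`. Therefore `(1/2) (K - K)* ⊆ conv(K ∪ -K)*`, and what
is needed is the reverse Santaló type inequality `vol (K - K)* * vol K ≥ (c / n)^n`
(`IsConvexBody.one_le_volume_product`).

For that inequality let `g` be a differentiable, strongly monotone, Lipschitz map of `ℝⁿ` with
`g 0 = 0`. For `α β = 1` the map `(x, x') ↦ (α x + β x', α g x - β g x')` is a bijection of
`ℝⁿ × ℝⁿ` whose Jacobian determinant does not depend on `α, β`. Thus the pull-back of the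
oscillatory integral `∫ exp (-i⟨a,b⟩ - δ(|a|² + |b|²))`, whose modulus is at least `1`, does not
depend on `α`. With `α = exp (-iw/2)`, real `α` corresponds to imaginary `w`; the integral is
holomorphic in `w` near `[0, π/2]`, hence constant there. At `w = π/2` the oscillation
`i⟨a,b⟩` has turned into the decay `⟨x, g x⟩ + ⟨x', g x'⟩`. The result is
`∫ |J| exp (-(⟨x, g x⟩ + ⟨x', g x'⟩) / 2) ≥ 1`, and changing variables back, now with `α = β = 1`,
gives `IsGoodMap.one_le_lintegral`.

This is applied to `g x = (∇Λ(x) - ∇Λ(-x)) / 2 + κ x` with a small `κ > 0`. The pairing `⟨x, g x⟩`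
controls the gauge of `(K - K)*` at `x`, up to an additive `O(n)`, by Jensen's inequality, while
`g x - g x'` lies in `K - K` up to the `κ`-terms. So the left-hand side above is at most `c^n` times
a product of the integrals of `exp (-gauge / 8)` and `exp (-n * gauge)` for `(K - K)*` and `K - K`,
that is, `(c n)^n vol (K - K)* * vol (K - K)`. A weak form of the Rogers–Shephard inequality replaces
`vol (K - K)` by `4^n vol K`.
-/

open MeasureTheory Pointwise
open scoped ENNReal RealInnerProductSpace

noncomputable section

/-- The polar body `K* = {x : ⟨x,y⟩ ≤ 1 for all y ∈ K}`. -/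
def polarBody {n : ℕ} (K : Set (Euc n)) : Set (Euc n) :=
  {x | ∀ y ∈ K, ⟪x, y⟫ ≤ 1}

/-- The covariance matrix of (the uniform measure on) `K`. -/
def covMatrix {n : ℕ} (K : Set (Euc n)) : Matrix (Fin n) (Fin n) ℝ :=
  Matrix.of ((volume K).toReal⁻¹ •
    ∫ x in K, fun i j => (x i - centroid K i) * (x j - centroid K j))

/-- The inertial ellipsoid `E_K = {x : xᵀ cov(K)⁻¹ x ≤ 1}`. -/
def inertialEllipsoid {n : ℕ} (K : Set (Euc n)) : Set (Euc n) :=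
  {x | ∑ i, ∑ j, x i * (covMatrix K)⁻¹ i j * x j ≤ 1}

/-! ### Strongly monotone maps and sums of graph points -/

/-- A strongly monotone Lipschitz map of a Hilbert space has a zero: for small `η` the map
`x ↦ x - η h x` is a contraction. -/
lemma exists_zero_of_strongMono {V : Type*} [NormedAddCommGroup V] [InnerProductSpace ℝ V]
    [CompleteSpace V] (h : V → V) (k M : ℝ) (hk : 0 < k)
    (hmono : ∀ x z, k * ‖x - z‖ ^ 2 ≤ ⟪h x - h z, x - z⟫)
    (hlip : ∀ x z, ‖h x - h z‖ ≤ M * ‖x - z‖) : ∃ x, h x = 0 := by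
  set η : ℝ := k / (M ^ 2 + k ^ 2) with hη
  have hden : 0 < M ^ 2 + k ^ 2 := by positivity
  have hηpos : 0 < η := by positivity
  have hηM : η * (M ^ 2 + k ^ 2) = k := by rw [hη]; field_simp
  have hq0 : 0 ≤ 1 - η * k := by
    have : η * k ≤ 1 := by
      rw [hη, div_mul_eq_mul_div, div_le_one hden]; nlinarith [sq_nonneg M]
    linarith
  have hq1 : Real.sqrt (1 - η * k) < 1 := by
    rw [Real.sqrt_lt' one_pos]; nlinarith [mul_pos hηpos hk]
  have hc : ContractingWith ⟨Real.sqrt (1 - η * k), Real.sqrt_nonneg _⟩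
      (fun x => x - η • h x) := by
    refine ⟨by exact_mod_cast hq1, LipschitzWith.of_dist_le_mul fun x z => ?_⟩
    rw [dist_eq_norm, dist_eq_norm]
    change _ ≤ Real.sqrt (1 - η * k) * _
    have e : x - η • h x - (z - η • h z) = (x - z) - η • (h x - h z) := by
      rw [smul_sub]; abel
    rw [e]
    refine abs_le_of_sq_le_sq' ?_ (by positivity) |>.2
    rw [norm_sub_sq_real, mul_pow, Real.sq_sqrt hq0, inner_smul_right, norm_smul, mul_pow,
      real_inner_comm, Real.norm_eq_abs, sq_abs]
    have h1 := hmono x z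
    have h2 : ‖h x - h z‖ ^ 2 ≤ M ^ 2 * ‖x - z‖ ^ 2 := by
      rw [← mul_pow]; exact pow_le_pow_left₀ (norm_nonneg _) (hlip x z) 2
    have h3 := mul_le_mul_of_nonneg_left h1 hηpos.le
    have h4 := mul_le_mul_of_nonneg_left h2 (sq_nonneg η)
    have h5 : η ^ 2 * M ^ 2 ≤ η * k := by
      have : η * (η * (M ^ 2 + k ^ 2)) = η * k := by rw [hηM]
      nlinarith [sq_nonneg (η * k)]
    have h6 := mul_le_mul_of_nonneg_right h5 (sq_nonneg ‖x - z‖)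
    nlinarith
  have hfix := hc.fixedPoint_isFixedPt
  refine ⟨hc.fixedPoint, ?_⟩
  have : η • h (hc.fixedPoint) = 0 := by
    have := hfix.eq
    simpa using this
  exact (smul_eq_zero.1 this).resolve_left hηpos.ne'

/-- A differentiable map of `ℝⁿ` that fixes the origin, is `k`-strongly monotone and
`M`-Lipschitz. -/
structure IsGoodMap {n : ℕ} (g : Euc n → Euc n) (k M : ℝ) : Prop where
  kpos : 0 < k
  diff : Differentiable ℝ g
  mono : ∀ x z, k * ‖x - z‖ ^ 2 ≤ ⟪g x - g z, x - z⟫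
  lip : ∀ x z, ‖g x - g z‖ ≤ M * ‖x - z‖
  zero : g 0 = 0

/-- The sum of `α` times a point of the graph of `g` and `β` times a point of the graph
of `-g`. -/
def shearMap {n : ℕ} (g : Euc n → Euc n) (α β : ℝ) (p : Euc n × Euc n) : Euc n × Euc n :=
  (α • p.1 + β • p.2, α • g p.1 - β • g p.2)

/-- Injectivity: subtracting two preimages of a point, the monotone pairings of the two components
add up to zero. Surjectivity: after eliminating the second component, a zero of a strongly monotone
map remains to be found. -/
lemma IsGoodMap.bijective {n : ℕ} {g : Euc n → Euc n} {k M : ℝ} (hg : IsGoodMap g k M)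
    {α β : ℝ} (hα : 0 < α) (hβ : 0 < β) : Function.Bijective (shearMap g α β) := by
  constructor
  · rintro ⟨x, x'⟩ ⟨z, z'⟩ h
    simp only [shearMap, Prod.mk.injEq] at h
    obtain ⟨h1, h2⟩ := h
    have e1 : α • (x - z) = -(β • (x' - z')) := by
      rw [smul_sub, smul_sub]
      linear_combination (norm := module) h1
    have e2 : α • (g x - g z) = β • (g x' - g z') := by
      rw [smul_sub, smul_sub]
      linear_combination (norm := module) h2
    have e3 : α ^ 2 * ⟪g x - g z, x - z⟫ = -(β ^ 2 * ⟪g x' - g z', x' - z'⟫) := by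
      have := congrArg₂ (fun u v : Euc n => ⟪u, v⟫) e2 e1
      simp only [inner_smul_left, inner_smul_right, inner_neg_right] at this
      simp only [conj_trivial] at this
      linear_combination this
    have h3 := mul_le_mul_of_nonneg_left (hg.mono x z) (sq_nonneg α)
    have h4 := mul_le_mul_of_nonneg_left (hg.mono x' z') (sq_nonneg β)
    have p1 : 0 ≤ α ^ 2 * (k * ‖x - z‖ ^ 2) := by have := hg.kpos; positivity
    have p2 : 0 ≤ β ^ 2 * (k * ‖x' - z'‖ ^ 2) := by have := hg.kpos; positivity
    have z1 : α ^ 2 * (k * ‖x - z‖ ^ 2) = 0 := by linarith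
    have z2 : β ^ 2 * (k * ‖x' - z'‖ ^ 2) = 0 := by linarith
    have hk := hg.kpos.ne'
    simp only [mul_eq_zero, pow_eq_zero_iff, ne_eq, OfNat.ofNat_ne_zero, not_false_eq_true,
      hα.ne', hβ.ne', hk, norm_eq_zero, false_or, sub_eq_zero] at z1 z2
    rw [z1, z2]
  · rintro ⟨a, b⟩
    obtain ⟨x, hx⟩ := exists_zero_of_strongMono
      (fun x => α • g x - β • g (β⁻¹ • (a - α • x)) - b) (α * k) (2 * α * M)
      (mul_pos hα hg.kpos) (by
        intro x z
        have e : α • g x - β • g (β⁻¹ • (a - α • x)) - b -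
          (α • g z - β • g (β⁻¹ • (a - α • z)) - b) =
          α • (g x - g z) - β • (g (β⁻¹ • (a - α • x)) - g (β⁻¹ • (a - α • z))) := by
          simp only [smul_sub]; abel
        rw [e]
        set u := β⁻¹ • (a - α • x)
        set v := β⁻¹ • (a - α • z)
        have huv : x - z = (-(β / α)) • (u - v) := by
          simp only [u, v, ← smul_sub, smul_smul]
          rw [show a - α • x - (a - α • z) = (-α) • (x - z) by
            rw [neg_smul, smul_sub]; abel, smul_smul]
          rw [show -(β / α) * β⁻¹ * -α = 1 by field_simp, one_smul]
        rw [inner_sub_left, inner_smul_left, inner_smul_left]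
        have hi : ⟪g u - g v, x - z⟫ = -(β / α) * ⟪g u - g v, u - v⟫ := by
          rw [huv, inner_smul_right]
        rw [hi]
        simp only [conj_trivial]
        have h1 := mul_le_mul_of_nonneg_left (hg.mono x z) hα.le
        have h2 : 0 ≤ ⟪g u - g v, u - v⟫ :=
          le_trans (by have := hg.kpos; positivity) (hg.mono u v)
        have h3 : 0 ≤ β * ((β / α) * ⟪g u - g v, u - v⟫) := by positivity
        nlinarith) (by
        intro x z
        have e : α • g x - β • g (β⁻¹ • (a - α • x)) - b -
          (α • g z - β • g (β⁻¹ • (a - α • z)) - b) =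
          α • (g x - g z) - β • (g (β⁻¹ • (a - α • x)) - g (β⁻¹ • (a - α • z))) := by
          simp only [smul_sub]; abel
        rw [e]
        refine (norm_sub_le _ _).trans ?_
        rw [norm_smul, norm_smul, Real.norm_of_nonneg hα.le, Real.norm_of_nonneg hβ.le]
        have h1 := mul_le_mul_of_nonneg_left (hg.lip x z) hα.le
        have h2 := mul_le_mul_of_nonneg_left
          (hg.lip (β⁻¹ • (a - α • x)) (β⁻¹ • (a - α • z))) hβ.le
        have h3 : ‖β⁻¹ • (a - α • x) - β⁻¹ • (a - α • z)‖ = α / β * ‖x - z‖ := by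
          rw [← smul_sub, show a - α • x - (a - α • z) = (-α) • (x - z) by
            rw [neg_smul, smul_sub]; abel, smul_smul, norm_smul]
          congr 1
          rw [Real.norm_eq_abs, abs_mul, abs_neg, abs_of_pos hα, abs_of_pos (inv_pos.2 hβ)]
          field_simp
        rw [h3] at h2
        have h4 : β * (M * (α / β * ‖x - z‖)) = α * (M * ‖x - z‖) := by
          field_simp
        linarith)
    refine ⟨(x, β⁻¹ • (a - α • x)), ?_⟩
    simp only [shearMap, smul_smul, mul_inv_cancel₀ hβ.ne', one_smul, Prod.mk.injEq]
    exact ⟨by abel, sub_eq_zero.1 hx⟩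

lemma IsGoodMap.differentiable_shearMap {n : ℕ} {g : Euc n → Euc n} {k M : ℝ}
    (hg : IsGoodMap g k M) (α β : ℝ) : Differentiable ℝ (shearMap g α β) := by
  have := hg.diff
  unfold shearMap
  fun_prop

/-- The absolute Jacobian determinant of `shearMap g 1 1`. -/
def shearJac {n : ℕ} (g : Euc n → Euc n) (p : Euc n × Euc n) : ℝ :=
  |(fderiv ℝ (shearMap g 1 1) p).det|

lemma measurable_shearJac {n : ℕ} (g : Euc n → Euc n) : Measurable (shearJac g) :=
  ((ContinuousLinearMap.continuous_det).measurable.comp (measurable_fderiv ℝ _)).abs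

/-- For `α β = 1` the Jacobian does not depend on `α, β`: the derivative of `shearMap g α β` is that
of `shearMap g 1 1` composed with `diag (α, β)`, whose determinant is `(α β)^n = 1`. -/
lemma IsGoodMap.abs_det_fderiv {n : ℕ} {g : Euc n → Euc n} {k M : ℝ}
    (hg : IsGoodMap g k M) {α β : ℝ} (hαβ : α * β = 1)
    (p : Euc n × Euc n) :
    |(fderiv ℝ (shearMap g α β) p).det| = shearJac g p := by
  have key : ∀ α β : ℝ, HasFDerivAt (shearMap g α β)
      ((α • ContinuousLinearMap.fst ℝ (Euc n) (Euc n) +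
          β • ContinuousLinearMap.snd ℝ (Euc n) (Euc n)).prod
        (α • (fderiv ℝ g p.1).comp (ContinuousLinearMap.fst ℝ (Euc n) (Euc n)) -
          β • (fderiv ℝ g p.2).comp (ContinuousLinearMap.snd ℝ (Euc n) (Euc n)))) p := by
    intro α β
    have h1 : HasFDerivAt (fun q : Euc n × Euc n => g q.1)
        ((fderiv ℝ g p.1).comp (ContinuousLinearMap.fst ℝ (Euc n) (Euc n))) p :=
      (hg.diff p.1).hasFDerivAt.comp p hasFDerivAt_fst
    have h2 : HasFDerivAt (fun q : Euc n × Euc n => g q.2)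
        ((fderiv ℝ g p.2).comp (ContinuousLinearMap.snd ℝ (Euc n) (Euc n))) p :=
      (hg.diff p.2).hasFDerivAt.comp p hasFDerivAt_snd
    exact ((hasFDerivAt_fst.const_smul α).add (hasFDerivAt_snd.const_smul β)).prodMk
      ((h1.const_smul α).sub (h2.const_smul β))
  rw [shearJac, (key α β).fderiv, (key 1 1).fderiv]
  simp only [one_smul, ContinuousLinearMap.det]
  set D : (Euc n × Euc n) →ₗ[ℝ] (Euc n × Euc n) :=
    LinearMap.prodMap (α • LinearMap.id) (β • LinearMap.id) with hD
  have hdet : LinearMap.det D = 1 := by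
    rw [hD, LinearMap.det_prodMap, LinearMap.det_smul, LinearMap.det_smul]
    simp only [LinearMap.det_id, mul_one]
    rw [← mul_pow, hαβ, one_pow]
  have : ∀ (L₁ L₂ : (Euc n × Euc n) →ₗ[ℝ] (Euc n × Euc n)), L₁ = L₂ ∘ₗ D →
      |LinearMap.det L₁| = |LinearMap.det L₂| := by
    rintro L₁ L₂ rfl
    rw [LinearMap.det_comp, hdet, mul_one]
  apply this
  ext x <;> simp [D]

instance isAddHaarMeasure_volume_prod (n : ℕ) :
    (volume : Measure (Euc n × Euc n)).IsAddHaarMeasure := by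
  rw [Measure.volume_eq_prod]; infer_instance

lemma IsGoodMap.integral_shearMap {n : ℕ} {g : Euc n → Euc n} {k M : ℝ}
    (hg : IsGoodMap g k M) {α β : ℝ} (hα : 0 < α) (hβ : 0 < β) (hαβ : α * β = 1)
    (f : Euc n × Euc n → ℂ) :
    ∫ p, shearJac g p • f (shearMap g α β p) = ∫ q, f q := by
  have h := integral_image_eq_integral_abs_det_fderiv_smul (μ := volume) MeasurableSet.univ
    (fun p _ => (hg.differentiable_shearMap α β p).hasFDerivAt.hasFDerivWithinAt)
    (hg.bijective hα hβ).injective.injOn f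
  rw [Set.image_univ, (hg.bijective hα hβ).surjective.range_eq] at h
  simp only [setIntegral_univ, hg.abs_det_fderiv hαβ] at h
  exact h.symm

lemma IsGoodMap.integrable_shearMap {n : ℕ} {g : Euc n → Euc n} {k M : ℝ}
    (hg : IsGoodMap g k M) {f : Euc n × Euc n → ℝ} (hf : Integrable f) :
    Integrable (fun p => shearJac g p • f (shearMap g 1 1 p)) := by
  have h := integrableOn_image_iff_integrableOn_abs_det_fderiv_smul (μ := volume)
    MeasurableSet.univ
    (fun p _ => (hg.differentiable_shearMap 1 1 p).hasFDerivAt.hasFDerivWithinAt)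
    (hg.bijective one_pos one_pos).injective.injOn f
  rw [Set.image_univ, (hg.bijective one_pos one_pos).surjective.range_eq] at h
  simp only [integrableOn_univ] at h
  exact h.1 hf

lemma IsGoodMap.lintegral_shearMap {n : ℕ} {g : Euc n → Euc n} {k M : ℝ}
    (hg : IsGoodMap g k M) (f : Euc n × Euc n → ℝ≥0∞) :
    ∫⁻ p, ENNReal.ofReal (shearJac g p) * f (shearMap g 1 1 p) = ∫⁻ q, f q := by
  have h := lintegral_image_eq_lintegral_abs_det_fderiv_mul (μ := volume) MeasurableSet.univ
    (fun p _ => (hg.differentiable_shearMap 1 1 p).hasFDerivAt.hasFDerivWithinAt)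
    (hg.bijective one_pos one_pos).injective.injOn f
  rw [Set.image_univ, (hg.bijective one_pos one_pos).surjective.range_eq] at h
  simp only [setLIntegral_univ] at h
  change _ = ∫⁻ p, ENNReal.ofReal (shearJac g p) * _ at h
  exact h.symm

/-! ### The complex quadratic form on graph points -/

/-- The complex quadratic form `i⟨a,b⟩ + δ(|a|² + |b|²)` on `ℝⁿ × ℝⁿ`. -/
def quadForm {n : ℕ} (δ : ℝ) (q : Euc n × Euc n) : ℂ :=
  Complex.I * (⟪q.1, q.2⟫ : ℝ) + (δ : ℂ) * ((‖q.1‖ ^ 2 + ‖q.2‖ ^ 2 : ℝ) : ℂ)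

/-- The integral is Gaussian, of modulus `(π² / (δ² + 1/4))^{n/2}`. -/
lemma integral_quadForm {n : ℕ} {δ : ℝ} (hδ : 0 < δ) (hδ' : δ ≤ 1 / 2) :
    1 ≤ ‖∫ q : Euc n × Euc n, Complex.exp (-quadForm δ q)‖ := by
  have hcont : Continuous fun q : Euc n × Euc n => Complex.exp (-quadForm δ q) := by
    unfold quadForm; fun_prop
  have hintg : Integrable fun q : Euc n × Euc n => Complex.exp (-quadForm δ q) := by
    have h1 : Integrable (fun x : Euc n => Real.exp (-δ * ‖x‖ ^ 2)) := by
      have := GaussianFourier.integrable_cexp_neg_mul_sq_norm_add (V := Euc n) (b := δ)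
        (by simpa using hδ) 0 0
      refine this.norm.congr (Filter.Eventually.of_forall fun x => ?_)
      simp only [Complex.norm_exp]
      congr 1
      simp [← Complex.ofReal_pow]
    have h2 := h1.mul_prod h1
    rw [← Measure.volume_eq_prod] at h2
    refine h2.mono' hcont.aestronglyMeasurable (Filter.Eventually.of_forall fun q => ?_)
    rw [Complex.norm_exp, ← Real.exp_add]
    apply le_of_eq
    congr 1
    simp only [quadForm, Complex.neg_re, Complex.add_re, Complex.mul_re, Complex.I_re,
      Complex.I_im, Complex.ofReal_re, Complex.ofReal_im]
    ring
  rw [Measure.volume_eq_prod] at hintg ⊢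
  rw [integral_prod_symm _ hintg]
  have hin : ∀ b : Euc n, ∫ a : Euc n, Complex.exp (-quadForm δ (a, b)) =
      (Real.pi / (δ : ℂ)) ^ ((n : ℂ) / 2) *
        Complex.exp (-((δ + 1 / (4 * δ) : ℝ) : ℂ) * ‖b‖ ^ 2) := by
    intro b
    have := GaussianFourier.integral_cexp_neg_mul_sq_norm_add (V := Euc n) (b := δ)
        (by simpa using hδ) (-Complex.I) b
    have e : ∀ a : Euc n, Complex.exp (-quadForm δ (a, b)) =
        Complex.exp (-(δ : ℂ) * ‖b‖ ^ 2) *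
        Complex.exp (-(δ : ℂ) * ‖a‖ ^ 2 + -Complex.I * (⟪b, a⟫ : ℝ)) := by
      intro a
      rw [← Complex.exp_add]
      congr 1
      simp only [quadForm, real_inner_comm a b]
      push_cast
      ring
    simp_rw [e]
    rw [integral_const_mul, this, finrank_euclideanSpace_fin, mul_left_comm, ← Complex.exp_add]
    congr 2
    have : (δ : ℂ) ≠ 0 := by exact_mod_cast hδ.ne'
    push_cast
    field_simp
    rw [Complex.I_sq]
    ring
  simp_rw [hin]
  have hd : 0 < δ + 1 / (4 * δ) := by positivity
  rw [integral_const_mul, GaussianFourier.integral_cexp_neg_mul_sq_norm (by simpa using hd),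
    finrank_euclideanSpace_fin]
  have e1 : (Real.pi / (δ : ℂ)) ^ ((n : ℂ) / 2) = (((Real.pi / δ) ^ ((n : ℝ) / 2) : ℝ) : ℂ) := by
    rw [Complex.ofReal_cpow (by positivity)]; push_cast; rfl
  have e2 : (Real.pi / ((δ + 1 / (4 * δ) : ℝ) : ℂ)) ^ ((n : ℂ) / 2) =
      (((Real.pi / (δ + 1 / (4 * δ))) ^ ((n : ℝ) / 2) : ℝ) : ℂ) := by
    rw [Complex.ofReal_cpow (by positivity)]; push_cast; rfl
  rw [e1, e2, ← Complex.ofReal_mul, Complex.norm_real, ← Real.mul_rpow (by positivity)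
    (by positivity), Real.norm_of_nonneg (by positivity)]
  apply Real.one_le_rpow _ (by positivity)
  have : Real.pi / δ * (Real.pi / (δ + 1 / (4 * δ))) = Real.pi ^ 2 / (δ ^ 2 + 1 / 4) := by
    field_simp
  rw [this, le_div_iff₀ (by positivity)]
  nlinarith [Real.pi_gt_three]

/-- `|x|² + |g x|²` summed over both components: the size of a pair of graph points. -/
def graphSize {n : ℕ} (g : Euc n → Euc n) (p : Euc n × Euc n) : ℝ :=
  (‖p.1‖ ^ 2 + ‖g p.1‖ ^ 2) + (‖p.2‖ ^ 2 + ‖g p.2‖ ^ 2)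

/-- The pairing `⟨x, g x⟩` summed over both components. -/
def graphPairing {n : ℕ} (g : Euc n → Euc n) (p : Euc n × Euc n) : ℝ :=
  ⟪p.1, g p.1⟫ + ⟪p.2, g p.2⟫

/-- The value of `quadForm δ` at `shearMap g α β p` for the complex parameters `α = exp (-iw/2)` and
`β = exp (iw/2)`, with all inner products extended bilinearly. -/
def phase {n : ℕ} (g : Euc n → Euc n) (δ : ℝ) (w : ℂ) (p : Euc n × Euc n) : ℂ :=
  Complex.exp (-(Complex.I * w)) *
      (Complex.I * (⟪p.1, g p.1⟫ : ℝ) + δ * ((‖p.1‖ ^ 2 + ‖g p.1‖ ^ 2 : ℝ) : ℂ)) +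
    Complex.exp (Complex.I * w) *
      (-(Complex.I * (⟪p.2, g p.2⟫ : ℝ)) + δ * ((‖p.2‖ ^ 2 + ‖g p.2‖ ^ 2 : ℝ) : ℂ)) +
    (Complex.I * (⟪p.2, g p.1⟫ - ⟪p.1, g p.2⟫ : ℝ) +
      2 * δ * ((⟪p.1, p.2⟫ - ⟪g p.1, g p.2⟫ : ℝ) : ℂ))

/-- For `w = -is` the coefficients `exp (∓iw/2)` are the positive reals `exp (∓s/2)`. -/
lemma phase_imag {n : ℕ} (g : Euc n → Euc n) (δ s : ℝ) (p : Euc n × Euc n) :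
    phase g δ (-(Complex.I * s)) p =
      quadForm δ (shearMap g (Real.exp (-s / 2)) (Real.exp (s / 2)) p) := by
  set α := Real.exp (-s / 2) with hα
  set β := Real.exp (s / 2) with hβ
  have h1 : Complex.exp (-(Complex.I * -(Complex.I * s))) = ((α ^ 2 : ℝ) : ℂ) := by
    rw [hα, ← Real.exp_nat_mul, Complex.ofReal_exp]
    congr 1
    push_cast
    linear_combination (s : ℂ) * Complex.I_sq
  have h2 : Complex.exp (Complex.I * -(Complex.I * s)) = ((β ^ 2 : ℝ) : ℂ) := by
    rw [hβ, ← Real.exp_nat_mul, Complex.ofReal_exp]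
    congr 1
    push_cast
    linear_combination -(s : ℂ) * Complex.I_sq
  have hαβ : α * β = 1 := by
    rw [hα, hβ, ← Real.exp_add]; simp [neg_div]
  have hc : (α : ℂ) * β = 1 := by exact_mod_cast hαβ
  rw [phase, h1, h2, quadForm]
  have e1 : ⟪(shearMap g α β p).1, (shearMap g α β p).2⟫ = α ^ 2 * ⟪p.1, g p.1⟫ +
      α * β * (⟪p.2, g p.1⟫ - ⟪p.1, g p.2⟫) - β ^ 2 * ⟪p.2, g p.2⟫ := by
    simp only [shearMap, inner_add_left, inner_sub_right, inner_smul_left, inner_smul_right,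
      conj_trivial]
    ring
  have e2 : ‖(shearMap g α β p).1‖ ^ 2 + ‖(shearMap g α β p).2‖ ^ 2 =
      α ^ 2 * (‖p.1‖ ^ 2 + ‖g p.1‖ ^ 2) + β ^ 2 * (‖p.2‖ ^ 2 + ‖g p.2‖ ^ 2) +
      2 * (α * β) * (⟪p.1, p.2⟫ - ⟪g p.1, g p.2⟫) := by
    simp only [shearMap, norm_add_sq_real, norm_sub_sq_real, inner_smul_left, inner_smul_right,
      conj_trivial, norm_smul, mul_pow, Real.norm_eq_abs, sq_abs]
    ring
  rw [e1, e2, hαβ]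
  push_cast
  ring

/-- Strong monotonicity and the Lipschitz bound make `⟨x, g x⟩` comparable to `|x|² + |g x|²`. -/
lemma IsGoodMap.inner_self {n : ℕ} {g : Euc n → Euc n} {k M : ℝ} (hg : IsGoodMap g k M)
    (x : Euc n) : k / (1 + M ^ 2) * (‖x‖ ^ 2 + ‖g x‖ ^ 2) ≤ ⟪x, g x⟫ := by
  have h1 := hg.mono x 0
  have h2 := hg.lip x 0
  rw [hg.zero, sub_zero, sub_zero] at h1 h2
  rw [real_inner_comm]
  refine le_trans ?_ h1
  have h3 : ‖g x‖ ^ 2 ≤ M ^ 2 * ‖x‖ ^ 2 := by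
    rw [← mul_pow]; exact pow_le_pow_left₀ (norm_nonneg _) h2 2
  rw [div_mul_eq_mul_div, div_le_iff₀ (by positivity)]
  nlinarith [hg.kpos]

lemma abs_inner_le_half {n : ℕ} (x y : Euc n) : |⟪x, y⟫| ≤ (‖x‖ ^ 2 + ‖y‖ ^ 2) / 2 := by
  have := abs_real_inner_le_norm x y
  nlinarith [sq_nonneg (‖x‖ - ‖y‖)]

/-- Coercivity of the pair map: the point `(x + x', g x - g x')` controls `(x, g x)` and
`(x', g x')`, because `⟨x, g x⟩ + ⟨x', g x'⟩ = ⟨x + x', g x⟩ - ⟨x', g x - g x'⟩`. -/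
lemma graphSize_le {n : ℕ} {g : Euc n → Euc n} {c : ℝ} (hc : 0 < c)
    (h : ∀ x, c * (‖x‖ ^ 2 + ‖g x‖ ^ 2) ≤ ⟪x, g x⟫) (p : Euc n × Euc n) :
    c ^ 2 * graphSize g p ≤ ‖p.1 + p.2‖ ^ 2 + ‖g p.1 - g p.2‖ ^ 2 := by
  have h1 := h p.1
  have h2 := h p.2
  have e : ⟪p.1, g p.1⟫ + ⟪p.2, g p.2⟫ = ⟪p.1 + p.2, g p.1⟫ - ⟪p.2, g p.1 - g p.2⟫ := by
    rw [inner_add_left, inner_sub_right]; ring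
  have h3 := abs_inner_le_half ((c⁻¹ : ℝ) • (p.1 + p.2)) (g p.1)
  have h4 := abs_inner_le_half p.2 ((c⁻¹ : ℝ) • (g p.1 - g p.2))
  rw [inner_smul_left] at h3
  rw [inner_smul_right] at h4
  simp only [conj_trivial, norm_smul, mul_pow, Real.norm_eq_abs, sq_abs] at h3 h4
  have h5 := (le_abs_self _).trans h3
  have h6 := (neg_le_abs _).trans h4
  unfold graphSize
  have h7 := mul_le_mul_of_nonneg_left h5 (sq_nonneg c)
  have h8 := mul_le_mul_of_nonneg_left h6 (sq_nonneg c)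
  have a1 : c ^ 2 * (c⁻¹ * ⟪p.1 + p.2, g p.1⟫) = c * ⟪p.1 + p.2, g p.1⟫ := by field_simp
  have a2 : c ^ 2 * -(c⁻¹ * ⟪p.2, g p.1 - g p.2⟫) = -(c * ⟪p.2, g p.1 - g p.2⟫) := by
    field_simp
  have a3 : c ^ 2 * (c⁻¹ ^ 2) = 1 := by field_simp
  rw [a1] at h7
  rw [a2] at h8
  have h9 := mul_le_mul_of_nonneg_left (add_le_add h1 h2) hc.le
  rw [e] at h9
  have b1 : 0 ≤ c ^ 2 * ‖p.1‖ ^ 2 := by positivity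
  have b2 : 0 ≤ c ^ 2 * ‖g p.2‖ ^ 2 := by positivity
  have h7' : c * ⟪p.1 + p.2, g p.1⟫ ≤ (‖p.1 + p.2‖ ^ 2 + c ^ 2 * ‖g p.1‖ ^ 2) / 2 := by
    refine h7.trans (le_of_eq ?_)
    linear_combination (‖p.1 + p.2‖ ^ 2 / 2) * a3
  have h8' : -(c * ⟪p.2, g p.1 - g p.2⟫) ≤
      (c ^ 2 * ‖p.2‖ ^ 2 + ‖g p.1 - g p.2‖ ^ 2) / 2 := by
    refine h8.trans (le_of_eq ?_)
    linear_combination (‖g p.1 - g p.2‖ ^ 2 / 2) * a3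
  nlinarith

lemma phase_re {n : ℕ} (g : Euc n → Euc n) (δ θ : ℝ) (p : Euc n × Euc n) :
    (phase g δ θ p).re = Real.sin θ * graphPairing g p +
    δ * (Real.cos θ * graphSize g p + 2 * (⟪p.1, p.2⟫ - ⟪g p.1, g p.2⟫)) := by
  unfold phase graphPairing graphSize
  have e1 : Complex.exp (-(Complex.I * θ)) = (Real.cos θ : ℂ) - Real.sin θ * Complex.I := by
    rw [mul_comm, ← neg_mul, Complex.exp_mul_I, Complex.cos_neg, Complex.sin_neg]
    push_cast; ring
  have e2 : Complex.exp (Complex.I * θ) = (Real.cos θ : ℂ) + Real.sin θ * Complex.I := by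
    rw [mul_comm, Complex.exp_mul_I]; push_cast; ring
  rw [e1, e2]
  generalize Real.cos θ = c, Real.sin θ = s, ‖p.1‖ ^ 2 + ‖g p.1‖ ^ 2 = N,
    ‖p.2‖ ^ 2 + ‖g p.2‖ ^ 2 = N'
  simp
  ring

/-- Coercivity of the phase along the real segment `[0, π/2]`. -/
lemma phase_re_ge {n : ℕ} {g : Euc n → Euc n} {δ : ℝ} (hδ : 0 < δ)
    (h : ∀ x, 2 * δ * (‖x‖ ^ 2 + ‖g x‖ ^ 2) ≤ ⟪x, g x⟫) {θ : ℝ}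
    (hθ : θ ∈ Set.Icc 0 (Real.pi / 2)) (p : Euc n × Euc n) :
    δ * (2 * δ) ^ 2 * graphSize g p ≤ (phase g δ θ p).re := by
  have hs : 0 ≤ Real.sin θ := Real.sin_nonneg_of_nonneg_of_le_pi hθ.1 (by linarith [hθ.2, Real.pi_pos])
  have hcs : 0 ≤ Real.cos θ := Real.cos_nonneg_of_mem_Icc ⟨by linarith [hθ.1, Real.pi_pos], hθ.2⟩
  have h1 : 1 ≤ Real.sin θ + Real.cos θ := by
    have := Real.sin_sq_add_cos_sq θ
    nlinarith [mul_nonneg hs hcs]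
  have hre := phase_re g δ θ p
  have h2 := graphSize_le (by positivity) h p
  have h3 : ‖p.1 + p.2‖ ^ 2 + ‖g p.1 - g p.2‖ ^ 2 =
      graphSize g p + 2 * (⟪p.1, p.2⟫ - ⟪g p.1, g p.2⟫) := by
    rw [norm_add_sq_real, norm_sub_sq_real, graphSize]; ring
  have h4 : 2 * δ * graphSize g p ≤ graphPairing g p := by
    unfold graphSize graphPairing; linarith [h p.1, h p.2]
  have hN : 0 ≤ graphSize g p := by unfold graphSize; positivity
  rw [hre]
  have h5 := mul_le_mul_of_nonneg_left h4 hs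
  have h6 := mul_le_mul_of_nonneg_left h2 hδ.le
  rw [h3] at h6
  have h7 : 0 ≤ δ * graphSize g p * (Real.sin θ + Real.cos θ - 1) :=
    mul_nonneg (by positivity) (by linarith)
  have h8 : 0 ≤ δ * graphSize g p * Real.sin θ := by positivity
  nlinarith

lemma norm_cexp_sub_le {u v : ℂ} (hv : ‖Complex.exp v‖ = 1) (huv : ‖u - v‖ ≤ 1) :
    ‖Complex.exp u - Complex.exp v‖ ≤ 2 * ‖u - v‖ := by
  have : Complex.exp u - Complex.exp v = Complex.exp v * (Complex.exp (u - v) - 1) := by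
    rw [mul_sub, ← Complex.exp_add]; ring_nf
  rw [this, norm_mul, hv, one_mul]
  exact Complex.norm_exp_sub_one_le huv

lemma phase_coeff_le {n : ℕ} {g : Euc n → Euc n} {δ : ℝ} (hδ : 0 < δ) (hδ' : δ ≤ 1 / 2)
    (σ : ℝ) (hσ : |σ| = 1) (x : Euc n) :
    ‖(Complex.I * ((σ * ⟪x, g x⟫ : ℝ) : ℂ) + δ * ((‖x‖ ^ 2 + ‖g x‖ ^ 2 : ℝ) : ℂ))‖
      ≤ ‖x‖ ^ 2 + ‖g x‖ ^ 2 := by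
  refine (norm_add_le _ _).trans ?_
  rw [norm_mul, norm_mul, Complex.norm_I, Complex.norm_real, Complex.norm_real,
    Complex.norm_real, Real.norm_eq_abs, abs_mul, hσ, Real.norm_of_nonneg hδ.le,
    Real.norm_of_nonneg (by positivity)]
  have := abs_inner_le_half x (g x)
  nlinarith [sq_nonneg ‖x‖, sq_nonneg ‖g x‖]

/-- The derivative of `phase` in the complex parameter. -/
def phaseDeriv {n : ℕ} (g : Euc n → Euc n) (δ : ℝ) (w : ℂ) (p : Euc n × Euc n) : ℂ :=
  -Complex.I * Complex.exp (-(Complex.I * w)) *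
      (Complex.I * (⟪p.1, g p.1⟫ : ℝ) + δ * ((‖p.1‖ ^ 2 + ‖g p.1‖ ^ 2 : ℝ) : ℂ)) +
    Complex.I * Complex.exp (Complex.I * w) *
      (-(Complex.I * (⟪p.2, g p.2⟫ : ℝ)) + δ * ((‖p.2‖ ^ 2 + ‖g p.2‖ ^ 2 : ℝ) : ℂ))

lemma hasDerivAt_phase {n : ℕ} (g : Euc n → Euc n) (δ : ℝ) (w : ℂ) (p : Euc n × Euc n) :
    HasDerivAt (fun w => phase g δ w p) (phaseDeriv g δ w p) w := by
  have h0 : HasDerivAt (fun w : ℂ => Complex.I * w) Complex.I w := by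
    simpa using (hasDerivAt_id w).const_mul Complex.I
  have h1 := h0.neg.cexp
  have h2 := h0.cexp
  have := ((h1.mul_const (Complex.I * (⟪p.1, g p.1⟫ : ℝ) +
      δ * ((‖p.1‖ ^ 2 + ‖g p.1‖ ^ 2 : ℝ) : ℂ))).add (h2.mul_const
      (-(Complex.I * (⟪p.2, g p.2⟫ : ℝ)) + δ * ((‖p.2‖ ^ 2 + ‖g p.2‖ ^ 2 : ℝ) : ℂ)))).add_const
      (Complex.I * (⟪p.2, g p.1⟫ - ⟪p.1, g p.2⟫ : ℝ) +
      2 * δ * ((⟪p.1, p.2⟫ - ⟪g p.1, g p.2⟫ : ℝ) : ℂ))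
  convert! this using 1
  unfold phaseDeriv
  simp only [Pi.neg_apply]
  ring

/-- The coercivity of the phase on `[0, π/2]` persists in a complex neighbourhood of this segment,
where the derivative of the phase is bounded as well. -/
lemma exp_bounds {n : ℕ} {g : Euc n → Euc n} {δ : ℝ} (hδ : 0 < δ) (hδ' : δ ≤ 1 / 2)
    (h : ∀ x, 2 * δ * (‖x‖ ^ 2 + ‖g x‖ ^ 2) ≤ ⟪x, g x⟫) {θ : ℝ}
    (hθ : θ ∈ Set.Icc 0 (Real.pi / 2)) {w : ℂ} (hw : dist w θ < δ ^ 3 / 2)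
    (p : Euc n × Euc n) :
    δ ^ 3 * graphSize g p ≤ (phase g δ w p).re ∧
      ‖phaseDeriv g δ w p‖ ≤ 2 * graphSize g p := by
  have hd3 : δ ^ 3 ≤ 1 / 8 := by
    have := pow_le_pow_left₀ hδ.le hδ' 3; linarith
  have hp3 : 0 < δ ^ 3 := by positivity
  have hX := phase_coeff_le (g := g) hδ hδ' 1 (by simp) p.1
  have hY := phase_coeff_le (g := g) hδ hδ' (-1) (by simp) p.2
  rw [one_mul] at hX
  have hY' : ‖(-(Complex.I * (⟪p.2, g p.2⟫ : ℝ)) +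
      δ * ((‖p.2‖ ^ 2 + ‖g p.2‖ ^ 2 : ℝ) : ℂ))‖ ≤ ‖p.2‖ ^ 2 + ‖g p.2‖ ^ 2 := by
    refine le_trans (le_of_eq ?_) hY
    congr 2
    push_cast; ring
  set X := (Complex.I * (⟪p.1, g p.1⟫ : ℝ) + δ * ((‖p.1‖ ^ 2 + ‖g p.1‖ ^ 2 : ℝ) : ℂ)) with hXd
  set Y := (-(Complex.I * (⟪p.2, g p.2⟫ : ℝ)) +
      δ * ((‖p.2‖ ^ 2 + ‖g p.2‖ ^ 2 : ℝ) : ℂ)) with hYd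
  have hu1 : ‖Complex.exp (-(Complex.I * (θ : ℂ)))‖ = 1 := by simp [Complex.norm_exp]
  have hu2 : ‖Complex.exp (Complex.I * (θ : ℂ))‖ = 1 := by simp [Complex.norm_exp]
  rw [dist_eq_norm] at hw
  have d1 : ‖-(Complex.I * w) - -(Complex.I * (θ : ℂ))‖ = ‖w - θ‖ := by
    rw [show -(Complex.I * w) - -(Complex.I * (θ : ℂ)) = -(Complex.I * (w - θ)) by ring,
      norm_neg, norm_mul, Complex.norm_I, one_mul]
  have d2 : ‖Complex.I * w - Complex.I * (θ : ℂ)‖ = ‖w - θ‖ := by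
    rw [← mul_sub, norm_mul, Complex.norm_I, one_mul]
  have c1 := norm_cexp_sub_le hu1 (u := -(Complex.I * w)) (by rw [d1]; linarith)
  have c2 := norm_cexp_sub_le hu2 (u := Complex.I * w) (by rw [d2]; linarith)
  rw [d1] at c1
  rw [d2] at c2
  have n1 : 0 ≤ ‖p.1‖ ^ 2 + ‖g p.1‖ ^ 2 := by positivity
  have n2 : 0 ≤ ‖p.2‖ ^ 2 + ‖g p.2‖ ^ 2 := by positivity
  have hN : graphSize g p = (‖p.1‖ ^ 2 + ‖g p.1‖ ^ 2) + (‖p.2‖ ^ 2 + ‖g p.2‖ ^ 2) := rfl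
  constructor
  · have hdiff : phase g δ w p - phase g δ θ p =
        (Complex.exp (-(Complex.I * w)) - Complex.exp (-(Complex.I * (θ : ℂ)))) * X +
        (Complex.exp (Complex.I * w) - Complex.exp (Complex.I * (θ : ℂ))) * Y := by
      simp only [phase, ← hXd, ← hYd]; ring
    have hle : ‖phase g δ w p - phase g δ θ p‖ ≤ δ ^ 3 * graphSize g p := by
      rw [hdiff, hN, mul_add (δ ^ 3)]
      refine (norm_add_le _ _).trans (add_le_add ?_ ?_)
      · rw [norm_mul]
        exact mul_le_mul (by linarith) hX (norm_nonneg _) (by linarith)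
      · rw [norm_mul]
        exact mul_le_mul (by linarith) hY' (norm_nonneg _) (by linarith)
    have h1 := phase_re_ge hδ h hθ p
    have h2 := (Complex.abs_re_le_norm _).trans hle
    rw [Complex.sub_re] at h2
    have h3 := neg_le_of_abs_le h2
    have h4 : 0 ≤ δ ^ 3 * graphSize g p := by rw [hN]; positivity
    nlinarith
  · have b1 : ‖Complex.exp (-(Complex.I * w))‖ ≤ 2 := by
      have := norm_sub_norm_le (Complex.exp (-(Complex.I * w)))
        (Complex.exp (-(Complex.I * (θ : ℂ))))
      rw [hu1] at this; linarith
    have b2 : ‖Complex.exp (Complex.I * w)‖ ≤ 2 := by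
      have := norm_sub_norm_le (Complex.exp (Complex.I * w))
        (Complex.exp (Complex.I * (θ : ℂ)))
      rw [hu2] at this; linarith
    rw [phaseDeriv, ← hXd, ← hYd, hN, mul_add (2 : ℝ)]
    refine (norm_add_le _ _).trans (add_le_add ?_ ?_)
    · rw [norm_mul, norm_mul, norm_neg, Complex.norm_I, one_mul]
      exact mul_le_mul b1 hX (norm_nonneg _) (by norm_num)
    · rw [norm_mul, norm_mul, Complex.norm_I, one_mul]
      exact mul_le_mul b2 hY' (norm_nonneg _) (by norm_num)

/-! ### Moving the contour -/

lemma integrable_gauss_prod {n : ℕ} {c : ℝ} (hc : 0 < c) :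
    Integrable fun q : Euc n × Euc n => Real.exp (-c * (‖q.1‖ ^ 2 + ‖q.2‖ ^ 2)) := by
  have h1 : Integrable (fun x : Euc n => Real.exp (-c * ‖x‖ ^ 2)) := by
    have := GaussianFourier.integrable_cexp_neg_mul_sq_norm_add (V := Euc n) (b := c)
      (by simpa using hc) 0 0
    refine this.norm.congr (Filter.Eventually.of_forall fun x => ?_)
    simp only [Complex.norm_exp]
    congr 1
    simp [← Complex.ofReal_pow]
  have h2 := h1.mul_prod h1
  rw [← Measure.volume_eq_prod] at h2
  refine h2.congr (Filter.Eventually.of_forall fun q => ?_)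
  simp only [← Real.exp_add]
  ring_nf

lemma IsGoodMap.continuous_graphSize {n : ℕ} {g : Euc n → Euc n} {k M : ℝ}
    (hg : IsGoodMap g k M) : Continuous (graphSize g) := by
  have := hg.diff.continuous
  unfold graphSize
  fun_prop

/-- `graphSize` is at least half of the squared norm of `shearMap g 1 1`, so the integrand is dominated
by the pull-back of a Gaussian. -/
lemma IsGoodMap.integrable_exp_graphSize {n : ℕ} {g : Euc n → Euc n} {k M : ℝ}
    (hg : IsGoodMap g k M) {c : ℝ} (hc : 0 < c) :
    Integrable fun p => shearJac g p * Real.exp (-c * graphSize g p) := by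
  have h := hg.integrable_shearMap (integrable_gauss_prod (n := n) (half_pos hc))
  refine h.mono' ?_ (Filter.Eventually.of_forall fun p => ?_)
  · exact ((measurable_shearJac g).mul (by
      have := hg.continuous_graphSize
      exact (by fun_prop : Continuous fun p => Real.exp (-c * graphSize g p)).measurable)).aestronglyMeasurable
  · have hj : 0 ≤ shearJac g p := abs_nonneg _
    rw [Real.norm_of_nonneg (by positivity), smul_eq_mul]
    refine mul_le_mul_of_nonneg_left (Real.exp_le_exp.2 ?_) hj
    simp only [shearMap, one_smul]
    have h1 : ‖p.1 + p.2‖ ^ 2 + ‖g p.1 - g p.2‖ ^ 2 ≤ 2 * graphSize g p := by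
      rw [norm_add_sq_real, norm_sub_sq_real, graphSize]
      have a1 := (le_abs_self _).trans (abs_inner_le_half p.1 p.2)
      have a2 := (neg_le_abs _).trans (abs_inner_le_half (g p.1) (g p.2))
      linarith
    nlinarith

/-- The oscillatory integral `∫ |det| exp (-phase)` over pairs of points. -/
def contourInt {n : ℕ} (g : Euc n → Euc n) (δ : ℝ) (w : ℂ) : ℂ :=
  ∫ p, shearJac g p • Complex.exp (-phase g δ w p)

/-- A complex neighbourhood of the segment `[0, π/2]`. -/
def segNhd (r : ℝ) : Set ℂ := Metric.thickening r (Complex.ofRealCLM '' Set.Icc 0 (Real.pi / 2))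

lemma segNhd_preconnected (r : ℝ) : IsPreconnected (segNhd r) :=
  (((convex_Icc 0 (Real.pi / 2)).linear_image Complex.ofRealCLM.toLinearMap).thickening
    r).isPreconnected

lemma mem_segNhd {r : ℝ} {w : ℂ} : w ∈ segNhd r ↔
    ∃ θ ∈ Set.Icc (0 : ℝ) (Real.pi / 2), dist w θ < r := by
  simp [segNhd, Metric.mem_thickening_iff]

lemma IsGoodMap.continuous_phase {n : ℕ} {g : Euc n → Euc n} {k M : ℝ}
    (hg : IsGoodMap g k M) (δ : ℝ) (w : ℂ) : Continuous (phase g δ w) := by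
  have := hg.diff.continuous
  unfold phase
  fun_prop

/-- Differentiation under the integral sign; half of the decay `exp (-δ³ * graphSize)` absorbs the
linear growth of the derivative of the phase. -/
lemma IsGoodMap.differentiableOn_contourInt {n : ℕ} {g : Euc n → Euc n} {k M : ℝ}
    (hg : IsGoodMap g k M) {δ : ℝ} (hδ : 0 < δ) (hδ' : δ ≤ 1 / 2)
    (h : ∀ x, 2 * δ * (‖x‖ ^ 2 + ‖g x‖ ^ 2) ≤ ⟪x, g x⟫) :
    DifferentiableOn ℂ (contourInt g δ) (segNhd (δ ^ 3 / 2)) := by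
  intro w₀ hw₀
  have hd3 : 0 < δ ^ 3 := by positivity
  have hmeas : ∀ w, AEStronglyMeasurable
      (fun p => shearJac g p • Complex.exp (-phase g δ w p)) volume := by
    intro w
    have h1 := hg.continuous_phase δ w
    have h2 : Continuous fun p => Complex.exp (-phase g δ w p) := by fun_prop
    exact (measurable_shearJac g).aestronglyMeasurable.smul h2.aestronglyMeasurable
  have hre : ∀ w ∈ segNhd (δ ^ 3 / 2), ∀ p, ‖Complex.exp (-phase g δ w p)‖ ≤
      Real.exp (-δ ^ 3 * graphSize g p) := by
    intro w hw p
    obtain ⟨θ, hθ, hd⟩ := mem_segNhd.1 hw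
    rw [Complex.norm_exp, Complex.neg_re]
    exact Real.exp_le_exp.2 (by linarith [(exp_bounds hδ hδ' h hθ hd p).1])
  have hintg : Integrable (fun p => shearJac g p • Complex.exp (-phase g δ w₀ p)) := by
    refine (hg.integrable_exp_graphSize hd3).mono' (hmeas w₀)
      (Filter.Eventually.of_forall fun p => ?_)
    have hj : 0 ≤ shearJac g p := abs_nonneg _
    rw [norm_smul, Real.norm_of_nonneg hj]
    exact mul_le_mul_of_nonneg_left (hre w₀ hw₀ p) hj
  have key := hasDerivAt_integral_of_dominated_loc_of_deriv_le (μ := volume) (𝕜 := ℂ)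
    (F := fun w p => shearJac g p • Complex.exp (-phase g δ w p))
    (F' := fun w p => shearJac g p • (Complex.exp (-phase g δ w p) * -phaseDeriv g δ w p))
    (bound := fun p => 4 / δ ^ 3 * (shearJac g p * Real.exp (-(δ ^ 3 / 2) * graphSize g p)))
    (x₀ := w₀) (s := segNhd (δ ^ 3 / 2))
    (Metric.isOpen_thickening.mem_nhds hw₀) (Filter.Eventually.of_forall hmeas) hintg ?_ ?_
    ((hg.integrable_exp_graphSize (half_pos hd3)).const_mul _) ?_
  · exact key.2.differentiableAt.differentiableWithinAt
  · have h1 := hg.continuous_phase δ w₀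
    have h3 := hg.diff.continuous
    have h2 : Continuous fun p => Complex.exp (-phase g δ w₀ p) * -phaseDeriv g δ w₀ p := by
      unfold phaseDeriv
      fun_prop
    exact (measurable_shearJac g).aestronglyMeasurable.smul h2.aestronglyMeasurable
  · refine Filter.Eventually.of_forall fun p w hw => ?_
    have hj : 0 ≤ shearJac g p := abs_nonneg _
    obtain ⟨θ, hθ, hd⟩ := mem_segNhd.1 hw
    have hb := (exp_bounds hδ hδ' h hθ hd p).2
    rw [norm_smul, Real.norm_of_nonneg hj, norm_mul, norm_neg, mul_left_comm (4 / δ ^ 3)]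
    refine mul_le_mul_of_nonneg_left ?_ hj
    have hN : 0 ≤ graphSize g p := by unfold graphSize; positivity
    refine (mul_le_mul (hre w hw p) hb (norm_nonneg _) (Real.exp_pos _).le).trans ?_
    have e1 : Real.exp (-δ ^ 3 * graphSize g p) =
        Real.exp (-(δ ^ 3 / 2) * graphSize g p) * Real.exp (-(δ ^ 3 / 2 * graphSize g p)) := by
      rw [← Real.exp_add]; ring_nf
    rw [e1, mul_assoc, mul_comm (4 / δ ^ 3)]
    refine mul_le_mul_of_nonneg_left ?_ (Real.exp_pos _).le
    have e2 : δ ^ 3 / 2 * graphSize g p * Real.exp (-(δ ^ 3 / 2 * graphSize g p)) ≤ 1 := by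
      rw [Real.exp_neg, ← div_eq_mul_inv, div_le_one (Real.exp_pos _)]
      linarith [Real.add_one_le_exp (δ ^ 3 / 2 * graphSize g p)]
    rw [le_div_iff₀ hd3]
    nlinarith
  · refine Filter.Eventually.of_forall fun p w _ => ?_
    exact ((hasDerivAt_phase g δ w p).neg.cexp).const_smul (shearJac g p)

/-- On the imaginary axis `contourInt` is the Gaussian integral after the real change of variables
`shearMap g (exp (-s/2)) (exp (s/2))`. -/
lemma IsGoodMap.contourInt_imag {n : ℕ} {g : Euc n → Euc n} {k M : ℝ}
    (hg : IsGoodMap g k M) (δ s : ℝ) :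
    contourInt g δ (-(Complex.I * s)) = ∫ q : Euc n × Euc n, Complex.exp (-quadForm δ q) := by
  have key := hg.integral_shearMap (Real.exp_pos (-s / 2)) (Real.exp_pos (s / 2))
    (by rw [← Real.exp_add]; simp [neg_div]) (fun q => Complex.exp (-quadForm δ q))
  rw [contourInt]
  simp_rw [phase_imag]
  exact key

/-- The contour integral does not change along `[0, π/2]`: it is holomorphic near this segment,
and constant on the imaginary axis near `0`, where it is a real change of variables. -/
lemma IsGoodMap.contourInt_eq {n : ℕ} {g : Euc n → Euc n} {k M : ℝ}
    (hg : IsGoodMap g k M) {δ : ℝ} (hδ : 0 < δ) (hδ' : δ ≤ 1 / 2)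
    (h : ∀ x, 2 * δ * (‖x‖ ^ 2 + ‖g x‖ ^ 2) ≤ ⟪x, g x⟫) :
    contourInt g δ ((Real.pi / 2 : ℝ) : ℂ) =
      ∫ q : Euc n × Euc n, Complex.exp (-quadForm δ q) := by
  have hd3 : 0 < δ ^ 3 / 2 := by positivity
  have hmem : ∀ θ ∈ Set.Icc (0 : ℝ) (Real.pi / 2), (θ : ℂ) ∈ segNhd (δ ^ 3 / 2) :=
    fun θ hθ => mem_segNhd.2 ⟨θ, hθ, by simpa using hd3⟩
  have han : AnalyticOnNhd ℂ (contourInt g δ) (segNhd (δ ^ 3 / 2)) :=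
    (hg.differentiableOn_contourInt hδ hδ' h).analyticOnNhd Metric.isOpen_thickening
  have hfreq : ∃ᶠ z in nhdsWithin (0 : ℂ) {0}ᶜ, contourInt g δ z =
      ∫ q : Euc n × Euc n, Complex.exp (-quadForm δ q) := by
    have ht : Filter.Tendsto (fun s : ℝ => -(Complex.I * s)) (nhdsWithin (0 : ℝ) {0}ᶜ)
        (nhdsWithin (0 : ℂ) {0}ᶜ) := by
      apply tendsto_nhdsWithin_of_tendsto_nhds_of_eventually_within
      · have : Continuous fun s : ℝ => -(Complex.I * s) := by fun_prop
        have h0 := this.tendsto 0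
        simp only [Complex.ofReal_zero, mul_zero, neg_zero] at h0
        exact h0.mono_left nhdsWithin_le_nhds
      · filter_upwards [self_mem_nhdsWithin] with s hs
        simpa using hs
    exact ht.frequently (Filter.Frequently.of_forall fun s => hg.contourInt_imag δ s)
  exact han.eqOn_of_preconnected_of_frequently_eq analyticOnNhd_const
    (segNhd_preconnected _)
    (by simpa using hmem 0 ⟨le_rfl, by positivity⟩) hfreq
    (hmem _ ⟨by positivity, le_rfl⟩)

/-- The abstract form of the reverse Santaló inequality for a monotone map `g`. -/
lemma IsGoodMap.one_le_lintegral {n : ℕ} {g : Euc n → Euc n} {k M : ℝ}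
    (hg : IsGoodMap g k M) (G : Euc n × Euc n → ℝ≥0∞)
    (hG : ∀ p, ENNReal.ofReal (Real.exp (-(graphPairing g p / 2))) ≤ G (shearMap g 1 1 p)) :
    1 ≤ ∫⁻ q, G q := by
  set c := k / (1 + M ^ 2) with hcd
  have hc : 0 < c := by have := hg.kpos; positivity
  set δ := min (c / 2) (1 / 2) with hδd
  have hδ : 0 < δ := lt_min (by positivity) (by norm_num)
  have hδ' : δ ≤ 1 / 2 := min_le_right _ _
  have hδc : 2 * δ ≤ c := by linarith [min_le_left (c / 2) (1 / 2)]
  have h : ∀ x, 2 * δ * (‖x‖ ^ 2 + ‖g x‖ ^ 2) ≤ ⟪x, g x⟫ := fun x =>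
    (mul_le_mul_of_nonneg_right hδc (by positivity)).trans (hg.inner_self x)
  have h1 : 1 ≤ ‖contourInt g δ ((Real.pi / 2 : ℝ) : ℂ)‖ₑ := by
    rw [hg.contourInt_eq hδ hδ' h, ← ofReal_norm, ENNReal.one_le_ofReal]
    exact integral_quadForm hδ hδ'
  rw [← hg.lintegral_shearMap G]
  refine h1.trans ((enorm_integral_le_lintegral_enorm _).trans (lintegral_mono fun p => ?_))
  have hj : 0 ≤ shearJac g p := abs_nonneg _
  rw [enorm_smul, Real.enorm_of_nonneg hj]
  refine mul_le_mul_right (le_trans ?_ (hG p)) _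
  rw [← ofReal_norm, Complex.norm_exp, Complex.neg_re]
  refine ENNReal.ofReal_le_ofReal (Real.exp_le_exp.2 (neg_le_neg ?_))
  rw [phase_re, Real.sin_pi_div_two, Real.cos_pi_div_two]
  have a1 := (neg_le_abs _).trans (abs_inner_le_half p.1 p.2)
  have a2 := (le_abs_self _).trans (abs_inner_le_half (g p.1) (g p.2))
  have a3 := h p.1
  have a4 := h p.2
  unfold graphPairing
  nlinarith

/-! ### The exponential family on a convex body -/

/-- The partition function `∫_K exp ⟨s,x⟩ dx`. -/
def expInt {n : ℕ} (K : Set (Euc n)) (s : Euc n) : ℝ := ∫ x in K, Real.exp ⟪s, x⟫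

/-- The mean of the density proportional to `exp ⟨s,·⟩` on `K`. -/
def expMean {n : ℕ} (K : Set (Euc n)) (s : Euc n) : Euc n :=
  (expInt K s)⁻¹ • ∫ x in K, Real.exp ⟪s, x⟫ • x

/-- The covariance operator of the density proportional to `exp ⟨s,·⟩` on `K`. -/
def expCov {n : ℕ} (K : Set (Euc n)) (s : Euc n) : Euc n →L[ℝ] Euc n :=
  (expInt K s)⁻¹ • ∫ x in K, Real.exp ⟪s, x⟫ •
    (innerSL ℝ (x - expMean K s)).smulRight (x - expMean K s)

section expFamily

variable {n : ℕ} {K : Set (Euc n)}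

lemma IsConvexBody.isFiniteMeasure (hK : IsConvexBody K) :
    IsFiniteMeasure (volume.restrict K) :=
  ⟨by simpa using hK.2.1.measure_lt_top⟩

lemma IsConvexBody.volume_pos (hK : IsConvexBody K) : 0 < volume K :=
  (isOpen_interior.measure_pos _ hK.2.2).trans_le (measure_mono interior_subset)

lemma IsConvexBody.volume_ne_top (hK : IsConvexBody K) : volume K ≠ ⊤ :=
  hK.2.1.measure_lt_top.ne

lemma IsConvexBody.toReal_pos (hK : IsConvexBody K) : 0 < (volume K).toReal :=
  ENNReal.toReal_pos hK.volume_pos.ne' hK.volume_ne_top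

lemma IsConvexBody.integrableOn (hK : IsConvexBody K) {F : Type*} [NormedAddCommGroup F]
    {ψ : Euc n → F} (hψ : Continuous ψ) : IntegrableOn ψ K :=
  hψ.continuousOn.integrableOn_compact hK.2.1

/-- Differentiation under the integral sign for exponentially tilted integrals over `K`. -/
lemma IsConvexBody.hasFDerivAt_integral (hK : IsConvexBody K) {F : Type*}
    [NormedAddCommGroup F] [NormedSpace ℝ F] {ψ : Euc n → F} (hψ : Continuous ψ) (s : Euc n) :
    HasFDerivAt (fun s => ∫ x in K, Real.exp ⟪s, x⟫ • ψ x)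
      (∫ x in K, Real.exp ⟪s, x⟫ • (innerSL ℝ x).smulRight (ψ x)) s := by
  obtain ⟨R, hR⟩ := hK.2.1.isBounded.exists_norm_le
  obtain ⟨C, hC⟩ := hK.2.1.exists_bound_of_continuousOn hψ.continuousOn
  have hcont : ∀ s : Euc n, Continuous fun x => Real.exp ⟪s, x⟫ • ψ x := fun s => by fun_prop
  have hc2 : Continuous fun x : Euc n => (innerSL ℝ x).smulRight (ψ x) := by
    exact (ContinuousLinearMap.smulRightL ℝ (Euc n) F).continuous₂.comp
      ((innerSL ℝ).continuous.prodMk hψ)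
  refine hasFDerivAt_integral_of_dominated_of_fderiv_le (𝕜 := ℝ) (μ := volume.restrict K)
    (F := fun s x => Real.exp ⟪s, x⟫ • ψ x)
    (F' := fun s x => Real.exp ⟪s, x⟫ • (innerSL ℝ x).smulRight (ψ x))
    (bound := fun _ => Real.exp ((‖s‖ + 1) * R) * (R * C))
    (Metric.ball_mem_nhds s one_pos)
    (Filter.Eventually.of_forall fun s => (hcont s).aestronglyMeasurable)
    (hK.integrableOn (hcont s)) ?_ ?_ ?_ ?_
  · have : Continuous fun x => Real.exp ⟪s, x⟫ • (innerSL ℝ x).smulRight (ψ x) := by fun_prop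
    exact this.aestronglyMeasurable
  · refine (ae_restrict_iff' hK.2.1.measurableSet).2 (Filter.Eventually.of_forall ?_)
    intro x hx t ht
    have hx' := hR x hx
    have hR0 : 0 ≤ R := (norm_nonneg _).trans hx'
    rw [norm_smul, Real.norm_of_nonneg (Real.exp_pos _).le, ContinuousLinearMap.norm_smulRight_apply,
      innerSL_apply_norm]
    have ht' : ‖t‖ ≤ ‖s‖ + 1 := by
      have := norm_sub_norm_le t s
      rw [Metric.mem_ball, dist_eq_norm] at ht
      linarith
    refine mul_le_mul (Real.exp_le_exp.2 ?_) (mul_le_mul hx' (hC x hx) (norm_nonneg _) hR0)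
      (by positivity) (by positivity)
    exact (real_inner_le_norm t x).trans (mul_le_mul ht' hx' (norm_nonneg _) (by positivity))
  · have := hK.isFiniteMeasure
    exact integrable_const _
  · refine Filter.Eventually.of_forall fun x t _ => ?_
    have h1 : HasFDerivAt (fun t : Euc n => ⟪t, x⟫) (innerSL ℝ x) t := by
      have := (innerSL ℝ x).hasFDerivAt (x := t)
      refine this.congr_of_eventuallyEq (Filter.Eventually.of_forall fun t => ?_)
      simp [real_inner_comm]
    have h2 := h1.exp.smul_const (ψ x)
    refine h2.congr_fderiv ?_
    ext v
    simp [mul_smul]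

lemma IsConvexBody.expInt_pos (hK : IsConvexBody K) (s : Euc n) : 0 < expInt K s := by
  have := hK.volume_pos
  have h1 : NeZero (volume.restrict K) := ⟨by simpa using this.ne'⟩
  exact integral_exp_pos (hK.integrableOn (by fun_prop))
end expFamily

/-! ### The gradient of the logarithmic partition function -/

section expFamily

variable {n : ℕ} {K : Set (Euc n)}

lemma IsConvexBody.hasFDerivAt_expInt (hK : IsConvexBody K) (s : Euc n) :
    HasFDerivAt (expInt K) (∫ x in K, Real.exp ⟪s, x⟫ • innerSL ℝ x) s := by
  have := hK.hasFDerivAt_integral (ψ := fun _ => (1 : ℝ)) continuous_const s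
  simp only [smul_eq_mul, mul_one] at this
  refine this.congr_fderiv (integral_congr_ae (Filter.Eventually.of_forall fun x => ?_))
  ext v
  simp

lemma IsConvexBody.integral_sub_expMean (hK : IsConvexBody K) (s : Euc n) :
    ∫ x in K, Real.exp ⟪s, x⟫ • (x - expMean K s) = 0 := by
  simp_rw [smul_sub]
  rw [integral_sub (hK.integrableOn (by fun_prop)) (hK.integrableOn (by fun_prop)),
    integral_smul_const]
  have h := (hK.expInt_pos s).ne'
  change _ - expInt K s • expMean K s = 0
  rw [expMean, smul_smul, mul_inv_cancel₀ h, one_smul, sub_self]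

lemma IsConvexBody.integrableOn_cov (hK : IsConvexBody K) (s b : Euc n) :
    IntegrableOn (fun x => Real.exp ⟪s, x⟫ • (innerSL ℝ (x - b)).smulRight (x - b)) K := by
  refine hK.integrableOn ?_
  have hc2 : Continuous fun x : Euc n => (innerSL ℝ (x - b)).smulRight (x - b) :=
    (ContinuousLinearMap.smulRightL ℝ (Euc n) (Euc n)).continuous₂.comp
      (((innerSL ℝ).continuous.comp (by fun_prop)).prodMk (by fun_prop))
  fun_prop

lemma IsConvexBody.expCov_apply (hK : IsConvexBody K) (s v : Euc n) :
    expCov K s v = (expInt K s)⁻¹ • ∫ x in K, Real.exp ⟪s, x⟫ •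
      ⟪x - expMean K s, v⟫ • (x - expMean K s) := by
  rw [expCov, smul_apply,
    ContinuousLinearMap.integral_apply (hK.integrableOn_cov s _)]
  simp [inner_sub_left]

lemma IsConvexBody.inner_expCov (hK : IsConvexBody K) (s v w : Euc n) :
    ⟪w, expCov K s v⟫ = (expInt K s)⁻¹ * ∫ x in K, Real.exp ⟪s, x⟫ *
      (⟪x - expMean K s, v⟫ * ⟪x - expMean K s, w⟫) := by
  rw [hK.expCov_apply, inner_smul_right, ← integral_inner (hK.integrableOn (by fun_prop))]
  congr 1
  refine integral_congr_ae (Filter.Eventually.of_forall fun x => ?_)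
  simp [inner_smul_right, real_inner_comm]

/-- The Hessian of the logarithmic partition function is the covariance operator. -/
lemma IsConvexBody.hasFDerivAt_expMean (hK : IsConvexBody K) (s : Euc n) :
    HasFDerivAt (expMean K) (expCov K s) s := by
  have hZ := hK.hasFDerivAt_expInt s
  have hV := hK.hasFDerivAt_integral (ψ := fun x => x) continuous_id s
  have hZ0 := (hK.expInt_pos s).ne'
  have hi := (hasDerivAt_inv hZ0).comp_hasFDerivAt s hZ
  refine (hi.smul hV).congr_fderiv ?_
  have hI0 := hK.integrableOn_cov s 0
  simp only [sub_zero] at hI0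
  have hI1 : IntegrableOn (fun x => Real.exp ⟪s, x⟫ • innerSL ℝ x) K :=
    hK.integrableOn (Real.continuous_exp.comp (by fun_prop) |>.smul (innerSL ℝ).continuous)
  ext1 v
  rw [hK.expCov_apply]
  have e1 : ∫ x in K, Real.exp ⟪s, x⟫ • ⟪x - expMean K s, v⟫ • (x - expMean K s) =
      (∫ x in K, Real.exp ⟪s, x⟫ • ⟪x, v⟫ • x) - (∫ x in K, Real.exp ⟪s, x⟫ • ⟪x, v⟫) •
        expMean K s := by
    rw [← integral_smul_const, ← integral_sub (hK.integrableOn (by fun_prop))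
      (hK.integrableOn (by fun_prop))]
    have : (0 : Euc n) = ⟪expMean K s, v⟫ • ∫ x in K, Real.exp ⟪s, x⟫ • (x - expMean K s) := by
      rw [hK.integral_sub_expMean, smul_zero]
    rw [← add_zero (∫ x in K, _), this, ← integral_smul, ← integral_add
      (hK.integrableOn (by fun_prop)) (hK.integrableOn (by fun_prop))]
    refine integral_congr_ae (Filter.Eventually.of_forall fun x => ?_)
    simp only [inner_sub_left, smul_sub, sub_smul, smul_smul]
    module
  rw [e1]
  simp only [add_apply, smul_apply,
    ContinuousLinearMap.smulRight_apply, Function.comp_apply]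
  rw [ContinuousLinearMap.integral_apply hI0, ContinuousLinearMap.integral_apply hI1]
  simp only [smul_apply, ContinuousLinearMap.smulRight_apply, innerSL_apply_apply]
  have e2 : ∫ x in K, Real.exp ⟪s, x⟫ • x = expInt K s • expMean K s := by
    rw [expMean, smul_smul, mul_inv_cancel₀ hZ0, one_smul]
  rw [e2, smul_sub, sub_eq_add_neg]
  congr 1
  rw [smul_smul, smul_smul, ← neg_smul]
  congr 1
  simp only [smul_eq_mul]
  field_simp

/-- The covariance form is positive definite because `K` has an interior point off the hyperplane
through the mean orthogonal to `v`. -/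
lemma IsConvexBody.inner_expCov_pos (hK : IsConvexBody K) (s : Euc n) {v : Euc n}
    (hv : v ≠ 0) : 0 < ⟪v, expCov K s v⟫ := by
  rw [hK.inner_expCov]
  refine mul_pos (inv_pos.2 (hK.expInt_pos s)) ?_
  set b := expMean K s
  have hcont : Continuous fun x : Euc n => Real.exp ⟪s, x⟫ * (⟪x - b, v⟫ * ⟪x - b, v⟫) := by
    fun_prop
  have hnn : ∀ x : Euc n, 0 ≤ Real.exp ⟪s, x⟫ * (⟪x - b, v⟫ * ⟪x - b, v⟫) := fun x =>
    mul_nonneg (Real.exp_pos _).le (mul_self_nonneg _)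
  rw [setIntegral_pos_iff_support_of_nonneg_ae (Filter.Eventually.of_forall hnn)
    (hK.integrableOn hcont)]
  have hopen : IsOpen ((Function.support fun x : Euc n =>
      Real.exp ⟪s, x⟫ * (⟪x - b, v⟫ * ⟪x - b, v⟫)) ∩ interior K) :=
    (hcont.isOpen_support).inter isOpen_interior
  refine (hopen.measure_pos volume ?_).trans_le
    (measure_mono (Set.inter_subset_inter_right _ interior_subset))
  -- a ball inside `K` cannot lie in the hyperplane `⟪x - b, v⟫ = 0`
  obtain ⟨z, hz⟩ := hK.2.2
  by_cases h0 : ⟪z - b, v⟫ = 0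
  · have ht : Filter.Tendsto (fun t : ℝ => z + t • v) (nhdsWithin 0 {0}ᶜ) (nhds z) := by
      have : Continuous fun t : ℝ => z + t • v := by fun_prop
      have := this.tendsto 0
      simp only [zero_smul, add_zero] at this
      exact this.mono_left nhdsWithin_le_nhds
    obtain ⟨t, ht1, ht0⟩ := ((ht.eventually (isOpen_interior.mem_nhds hz)).and
      self_mem_nhdsWithin).exists
    refine ⟨z + t • v, ?_, ht1⟩
    have : ⟪z + t • v - b, v⟫ ≠ 0 := by
      rw [add_sub_right_comm, inner_add_left, h0, inner_smul_left, zero_add]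
      exact mul_ne_zero (by simpa using ht0) (inner_self_ne_zero.2 hv)
    exact mul_ne_zero (Real.exp_pos _).ne' (mul_ne_zero this this)
  · exact ⟨z, mul_ne_zero (Real.exp_pos _).ne' (mul_ne_zero h0 h0), hz⟩

/-- The gradient map is strictly monotone, since its derivative is positive definite on segments. -/
lemma IsConvexBody.inner_expMean_sub (hK : IsConvexBody K) {s t : Euc n} (hst : s ≠ t) :
    0 < ⟪expMean K s - expMean K t, s - t⟫ := by
  set v := s - t
  have hv : v ≠ 0 := sub_ne_zero.2 hst
  have hd : ∀ r : ℝ, HasDerivAt (fun r : ℝ => ⟪expMean K (t + r • v), v⟫)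
      ⟪expCov K (t + r • v) v, v⟫ r := by
    intro r
    have h1 : HasDerivAt (fun r : ℝ => t + r • v) v r := by
      simpa using ((hasDerivAt_id r).smul_const v).const_add t
    have h2 := (hK.hasFDerivAt_expMean (t + r • v)).comp_hasDerivAt r h1
    have h3 := h2.inner ℝ (hasDerivAt_const r v)
    simpa using h3
  have hmono := strictMono_of_deriv_pos (f := fun r : ℝ => ⟪expMean K (t + r • v), v⟫)
    fun r => by
      rw [(hd r).deriv, real_inner_comm]
      exact hK.inner_expCov_pos _ hv
  have := hmono (zero_lt_one (α := ℝ))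
  simp only [zero_smul, add_zero, one_smul] at this
  rw [inner_sub_left, sub_pos]
  simpa [v] using this

lemma IsConvexBody.expMean_injective (hK : IsConvexBody K) : Function.Injective (expMean K) := by
  intro s t h
  by_contra hst
  have := hK.inner_expMean_sub hst
  simp [h] at this

lemma IsConvexBody.expMean_mem (hK : IsConvexBody K) (s : Euc n) : expMean K s ∈ K := by
  have hZ := hK.expInt_pos s
  have h0 : NeZero (volume.restrict K) := ⟨by simpa using hK.volume_pos.ne'⟩
  have hf : Continuous fun x : Euc n => Real.exp ⟪s, x⟫ := by fun_prop
  have hp : IsProbabilityMeasure ((volume.restrict K).tilted fun x => ⟪s, x⟫) :=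
    isProbabilityMeasure_tilted (hK.integrableOn hf)
  have h1 : expMean K s = ∫ x, x ∂((volume.restrict K).tilted fun x => ⟪s, x⟫) := by
    rw [integral_tilted]
    simp only [div_eq_inv_mul, mul_smul]
    rw [integral_smul]
    rfl
  rw [h1]
  refine hK.1.integral_mem hK.2.1.isClosed ?_ ?_
  · refine (tilted_absolutelyContinuous _ _).ae_le ?_
    exact (ae_restrict_iff' hK.2.1.measurableSet).2 (Filter.Eventually.of_forall fun x hx => hx)
  · rw [integrable_tilted_iff]
    · exact hK.integrableOn (by fun_prop : Continuous fun x : Euc n => Real.exp ⟪s, x⟫ • x)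
    · exact hK.integrableOn hf

end expFamily

/-! ### Covariance matrices and the Jacobian -/

section expFamily

variable {n : ℕ} {K : Set (Euc n)}

lemma IsConvexBody.integral_expWeight_smul (hK : IsConvexBody K) {F : Type*}
    [NormedAddCommGroup F] [NormedSpace ℝ F] (s : Euc n) (ψ : Euc n → F) :
    ∫ x, expWeight K s x • ψ x = ∫ x in K, Real.exp ⟪s, x⟫ • ψ x := by
  rw [← integral_indicator hK.2.1.measurableSet]
  refine integral_congr_ae (Filter.Eventually.of_forall fun x => ?_)
  by_cases hx : x ∈ K <;> simp [expWeight, hx]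

lemma IsConvexBody.integral_expWeight (hK : IsConvexBody K) (s : Euc n) :
    ∫ x, expWeight K s x = expInt K s :=
  integral_indicator hK.2.1.measurableSet

lemma IsConvexBody.funCentroid_eq (hK : IsConvexBody K) (s : Euc n) :
    funCentroid (expWeight K s) = expMean K s := by
  rw [funCentroid, hK.integral_expWeight, hK.integral_expWeight_smul, expMean]

/-- Entries of a matrix-valued integral over `K`. -/
lemma IsConvexBody.integral_matrix_apply (hK : IsConvexBody K) {φ : Euc n → Fin n → Fin n → ℝ}
    (hφ : Continuous φ) (i j : Fin n) : (∫ x in K, φ x) i j = ∫ x in K, φ x i j := by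
  have h1 := ((ContinuousLinearMap.proj (R := ℝ) (φ := fun _ : Fin n => ℝ) j).comp
    (ContinuousLinearMap.proj (R := ℝ) (φ := fun _ : Fin n => Fin n → ℝ) i)).integral_comp_comm
    (hK.integrableOn hφ)
  simpa using h1.symm

lemma IsConvexBody.funCov_apply (hK : IsConvexBody K) (s : Euc n) (i j : Fin n) :
    funCov (expWeight K s) i j =
      ⟪EuclideanSpace.single i (1 : ℝ), expCov K s (EuclideanSpace.single j 1)⟫ := by
  have e : ∀ x, (fun i j => expWeight K s x * ((x i - funCentroid (expWeight K s) i) *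
      (x j - funCentroid (expWeight K s) j))) =
      expWeight K s x • fun i j => (x i - expMean K s i) * (x j - expMean K s j) := by
    intro x
    rw [hK.funCentroid_eq]
    rfl
  change (∫ x, expWeight K s x)⁻¹ * (∫ x, fun i j => expWeight K s x *
    ((x i - funCentroid (expWeight K s) i) * (x j - funCentroid (expWeight K s) j)) :
      Fin n → Fin n → ℝ) i j = _
  rw [integral_congr_ae (Filter.Eventually.of_forall e), hK.integral_expWeight_smul,
    hK.integral_expWeight, hK.inner_expCov, hK.integral_matrix_apply (by fun_prop)]
  congr 1
  refine integral_congr_ae (Filter.Eventually.of_forall fun x => ?_)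
  simp [EuclideanSpace.inner_single_right, mul_comm]

lemma IsConvexBody.det_funCov (hK : IsConvexBody K) (s : Euc n) :
    (funCov (expWeight K s)).det = (expCov K s).det := by
  rw [ContinuousLinearMap.det, ← LinearMap.det_toMatrix (EuclideanSpace.basisFun (Fin n) ℝ).toBasis]
  congr 1
  ext i j
  rw [hK.funCov_apply, LinearMap.toMatrix_apply]
  simp [EuclideanSpace.inner_single_left]

lemma IsConvexBody.det_funCov_pos (hK : IsConvexBody K) (s : Euc n) :
    0 < (funCov (expWeight K s)).det := by
  refine Matrix.PosDef.det_pos (Matrix.PosDef.of_dotProduct_mulVec_pos ?_ ?_)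
  · ext i j
    rw [Matrix.conjTranspose_apply, hK.funCov_apply, hK.funCov_apply, hK.inner_expCov,
      hK.inner_expCov]
    simp [mul_comm]
  · intro v hv
    have := hK.inner_expCov_pos s (v := WithLp.toLp 2 v) (by simpa using hv)
    refine this.trans_eq ?_
    have h1 : WithLp.toLp 2 v = ∑ j, v j • EuclideanSpace.single j (1 : ℝ) := by
      ext i
      simp [Finset.sum_apply, Pi.single_apply]
    rw [h1]
    simp only [map_sum, map_smul, sum_inner, inner_sum, inner_smul_left, inner_smul_right,
      dotProduct, Matrix.mulVec, hK.funCov_apply, Finset.mul_sum]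
    rw [Finset.sum_comm]
    refine Finset.sum_congr rfl fun i _ => Finset.sum_congr rfl fun j _ => ?_
    simp only [star_trivial, conj_trivial]
    ring

/-- The change of variables `s ↦ expMean K s` is injective into `K`, with Jacobian
`det cov(f_s)`. -/
lemma IsConvexBody.lintegral_det_le (hK : IsConvexBody K) {S : Set (Euc n)}
    (hS : MeasurableSet S) :
    ∫⁻ s in S, ENNReal.ofReal (funCov (expWeight K s)).det ≤ volume K := by
  have h := lintegral_abs_det_fderiv_eq_addHaar_image volume hS
    (fun s _ => (hK.hasFDerivAt_expMean s).hasFDerivWithinAt) hK.expMean_injective.injOn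
  have e : ∀ s, |(expCov K s).det| = (funCov (expWeight K s)).det := fun s => by
    rw [← hK.det_funCov, abs_of_pos (hK.det_funCov_pos s)]
  simp_rw [e] at h
  rw [h]
  exact measure_mono (Set.image_subset_iff.2 fun s _ => hK.expMean_mem s)

/-- Lower bound for the partition function, from the copy `(1-δ) x₀ + δ K` of `K`. -/
lemma IsConvexBody.le_expInt (hK : IsConvexBody K) {s x₀ : Euc n} (hx₀ : x₀ ∈ K) {δ m : ℝ}
    (hδ : 0 < δ) (hδ' : δ ≤ 1) (hm : ∀ y ∈ K, m ≤ ⟪s, y⟫) :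
    δ ^ n * (volume K).toReal * Real.exp ((1 - δ) * ⟪s, x₀⟫ + δ * m) ≤ expInt K s := by
  set T : Set (Euc n) := (fun y => (1 - δ) • x₀ + y) '' (δ • K) with hT
  have hTK : T ⊆ K := by
    rintro _ ⟨_, ⟨y, hy, rfl⟩, rfl⟩
    exact hK.1 hx₀ hy (by linarith) hδ.le (by ring)
  have hvol : (volume T).toReal = δ ^ n * (volume K).toReal := by
    rw [hT, Set.image_add_left, measure_preimage_add, Measure.addHaar_smul]
    simp [abs_of_pos hδ, hδ.le]
  have hTm : MeasurableSet T :=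
    ((hK.2.1.smul δ).image (by fun_prop)).measurableSet
  have hintg : IntegrableOn (fun x : Euc n => Real.exp ⟪s, x⟫) K := hK.integrableOn (by fun_prop)
  calc _ = ∫ x in T, Real.exp ((1 - δ) * ⟪s, x₀⟫ + δ * m) := by
        rw [setIntegral_const, smul_eq_mul, measureReal_def, hvol]
    _ ≤ ∫ x in T, Real.exp ⟪s, x⟫ := by
        refine setIntegral_mono_on ?_ (hintg.mono_set hTK) hTm ?_
        · exact integrableOn_const ((measure_mono hTK).trans_lt hK.2.1.measure_lt_top).ne
        · rintro _ ⟨_, ⟨y, hy, rfl⟩, rfl⟩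
          refine Real.exp_le_exp.2 ?_
          simp only [inner_add_right, inner_smul_right]
          have := mul_le_mul_of_nonneg_left (hm y hy) hδ.le
          linarith
    _ ≤ expInt K s := setIntegral_mono_set hintg
        (Filter.Eventually.of_forall fun x => (Real.exp_pos _).le) hTK.eventuallyLE

end expFamily

/-! ### Isotropic constants and the centroid condition -/

section expFamily

variable {n : ℕ} {K : Set (Euc n)}

/-- The supremum of `f_s / ∫ f_s` is bounded through the copy of `K` shrunk by `1/2` towards the point
of evaluation. Nonnegativity is recorded for later integration. -/
lemma IsConvexBody.isotropicConstant_pow_le (hK : IsConvexBody K) (hn : n ≠ 0) {s : Euc n} {a : ℝ}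
    (ha : ∀ x ∈ K, |⟪s, x⟫| ≤ a) :
    0 ≤ isotropicConstant (expWeight K s) ^ (2 * n) ∧
    isotropicConstant (expWeight K s) ^ (2 * n) ≤
      (2 ^ n * Real.exp a / (volume K).toReal) ^ 2 * (funCov (expWeight K s)).det := by
  have hZ := hK.expInt_pos s
  have hv := hK.toReal_pos
  have hd := (hK.det_funCov_pos s).le
  have hw0 : ∀ x, 0 ≤ expWeight K s x := fun x =>
    Set.indicator_nonneg (fun y _ => (Real.exp_pos _).le) x
  have hw : ∀ x, expWeight K s x ≤ expInt K s * (2 ^ n * Real.exp a / (volume K).toReal) := by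
    intro x
    by_cases hx : x ∈ K
    · have h1 := hK.le_expInt hx (s := s) (δ := 1 / 2) (m := -a) (by norm_num) (by norm_num)
        fun y hy => (abs_le.1 (ha y hy)).1
      have h2 : expWeight K s x ≤ Real.exp ((1 - 1 / 2) * ⟪s, x⟫ + 1 / 2 * -a) * Real.exp a := by
        simp only [expWeight, Set.indicator_of_mem hx]
        rw [← Real.exp_add, Real.exp_le_exp]
        linarith [(abs_le.1 (ha x hx)).2]
      refine h2.trans ?_
      rw [← mul_div_assoc, le_div_iff₀ hv]
      calc _ = (1 / 2) ^ n * (volume K).toReal * Real.exp ((1 - 1 / 2) * ⟪s, x⟫ + 1 / 2 * -a) *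
            (2 ^ n * Real.exp a) := by
              have : ((1 : ℝ) / 2) ^ n * 2 ^ n = 1 := by rw [← mul_pow]; norm_num
              linear_combination (-Real.exp ((1 - 1 / 2) * ⟪s, x⟫ + 1 / 2 * -a) * Real.exp a *
                (volume K).toReal) * this
        _ ≤ _ := mul_le_mul_of_nonneg_right h1 (by positivity)
    · simp only [expWeight, Set.indicator_of_notMem hx]
      positivity
  set A := (⨆ x, expWeight K s x) / expInt K s with hA
  have hA0 : 0 ≤ A := div_nonneg (Real.iSup_nonneg hw0) hZ.le
  have hA1 : A ≤ 2 ^ n * Real.exp a / (volume K).toReal := by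
    rw [hA, div_le_iff₀' hZ]
    exact ciSup_le hw
  have hn' : (n : ℝ) ≠ 0 := by exact_mod_cast hn
  have e : isotropicConstant (expWeight K s) ^ (2 * n) = A ^ 2 * (funCov (expWeight K s)).det := by
    rw [isotropicConstant, hK.integral_expWeight, mul_pow]
    congr 1
    · rw [mul_comm 2 n, pow_mul, Real.rpow_inv_natCast_pow hA0 hn]
    · have : 2 * (n : ℝ) = ((2 * n : ℕ) : ℝ) := by push_cast; ring
      rw [this, Real.rpow_inv_natCast_pow hd (by omega)]
  rw [e]
  exact ⟨by positivity, mul_le_mul_of_nonneg_right (pow_le_pow_left₀ hA0 hA1 2) hd⟩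

/-- The pointwise bound on `L_{f_s}^{2n}`, integrated by means of
`∫_S det cov(f_s) ≤ vol K`. -/
lemma IsConvexBody.integral_isotropicConstant_le (hK : IsConvexBody K) (hn : n ≠ 0)
    {S : Set (Euc n)} (hS : MeasurableSet S) {a : ℝ} (ha : ∀ s ∈ S, ∀ x ∈ K, |⟪s, x⟫| ≤ a) :
    ∫ s in S, isotropicConstant (expWeight K s) ^ (2 * n) ≤
      4 ^ n * Real.exp (2 * a) / (volume K).toReal := by
  have hv := hK.toReal_pos
  set c := (2 ^ n * Real.exp a / (volume K).toReal) ^ 2 with hc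
  set d : Euc n → ℝ≥0∞ := fun s => ENNReal.ofReal (funCov (expWeight K s)).det with hd
  have hdm : AEMeasurable d (volume.restrict S) := by
    have h := aemeasurable_ofReal_abs_det_fderivWithin volume hS
      (fun s _ => (hK.hasFDerivAt_expMean s).hasFDerivWithinAt)
    refine h.congr (Filter.Eventually.of_forall fun s => ?_)
    simp only [hd]
    rw [← hK.det_funCov, abs_of_pos (hK.det_funCov_pos s)]
  have hle : ∫⁻ s in S, d s ≤ volume K := hK.lintegral_det_le hS
  have hfin : ∫⁻ s in S, d s ≠ ⊤ := (hle.trans_lt hK.volume_ne_top.lt_top).ne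
  have hintg := integrable_toReal_of_lintegral_ne_top hdm hfin
  have hdr : ∀ s, (d s).toReal = (funCov (expWeight K s)).det := fun s =>
    ENNReal.toReal_ofReal (hK.det_funCov_pos s).le
  calc _ ≤ ∫ s in S, c * (d s).toReal := by
        refine integral_mono_of_nonneg ?_ (hintg.const_mul c) ?_ <;>
        refine (ae_restrict_iff' hS).2 (Filter.Eventually.of_forall fun s hs => ?_)
        · exact (hK.isotropicConstant_pow_le hn (ha s hs)).1
        · simp only [hdr]
          exact (hK.isotropicConstant_pow_le hn (ha s hs)).2
    _ = c * (∫⁻ s in S, d s).toReal := by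
        rw [integral_const_mul, integral_toReal hdm (ae_lt_top' hdm hfin)]
    _ ≤ c * (volume K).toReal := by
        refine mul_le_mul_of_nonneg_left ?_ (by positivity)
        exact ENNReal.toReal_mono hK.volume_ne_top hle
    _ = _ := by
        rw [hc, div_pow, mul_pow, ← pow_mul, mul_comm n 2, pow_mul, ← Real.exp_nat_mul]
        push_cast
        field_simp
        norm_num

/-- If the centroid of `K` lies in `(n+1)⁻¹ E_K`, every `s` in the polar body of `K - K` satisfies
`|⟪s,·⟫| ≤ 2` on `K`. -/
lemma IsConvexBody.abs_inner_le_two (hK : IsConvexBody K)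
    (hc : centroid K ∈ ((n : ℝ) + 1)⁻¹ • inertialEllipsoid K) {s : Euc n}
    (hs : s ∈ polarBody (K - K)) {x : Euc n} (hx : x ∈ K) : |⟪s, x⟫| ≤ 2 := by
  have hvK : expInt K 0 = (volume K).toReal := by simp [expInt, measureReal_def]
  have hb : expMean K 0 = centroid K := by
    rw [expMean, hvK, centroid]
    simp
  have hcov : covMatrix K = funCov (expWeight K 0) := by
    ext i j
    rw [hK.funCov_apply, hK.inner_expCov, hvK, hb]
    change (volume K).toReal⁻¹ * (∫ x in K, fun i j => (x i - centroid K i) *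
      (x j - centroid K j) : Fin n → Fin n → ℝ) i j = _
    rw [hK.integral_matrix_apply (by fun_prop)]
    congr 1
    refine integral_congr_ae (Filter.Eventually.of_forall fun x => ?_)
    simp [EuclideanSpace.inner_single_right, mul_comm]
  have happ : ∀ u : Euc n, ∀ i, (expCov K 0 u) i = (funCov (expWeight K 0)).mulVec u i := by
    intro u i
    have h1 : u = ∑ j, u j • EuclideanSpace.single j (1 : ℝ) := by
      ext i
      simp [Finset.sum_apply, Pi.single_apply]
    conv_lhs => rw [h1]
    simp only [Matrix.mulVec, dotProduct, hK.funCov_apply]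
    rw [← one_mul ((expCov K 0 _) i)]
    have := EuclideanSpace.inner_single_left (𝕜 := ℝ) i 1
      (expCov K 0 (∑ j, u j • EuclideanSpace.single j (1 : ℝ)))
    rw [map_one] at this
    rw [← this]
    simp only [map_sum, map_smul, inner_sum, inner_smul_right]
    exact Finset.sum_congr rfl fun j _ => mul_comm _ _
  obtain ⟨y, hy, hyc⟩ := hc
  set A := covMatrix K with hA
  have hdet : IsUnit A.det := by rw [hcov]; exact (hK.det_funCov_pos 0).ne'.isUnit
  -- `u = A⁻¹ y`
  set u : Euc n := WithLp.toLp 2 (A⁻¹.mulVec y) with hu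
  have hAu : expCov K 0 u = y := by
    ext i
    rw [happ, ← hcov, hu]
    simp [Matrix.mulVec_mulVec, Matrix.mul_nonsing_inv _ hdet]
  have huy : ⟪u, y⟫ ≤ 1 := by
    refine le_of_eq_of_le ?_ hy
    simp only [PiLp.inner_apply, hu, Matrix.mulVec, dotProduct, Finset.mul_sum,
      RCLike.inner_apply, conj_trivial]
    exact Finset.sum_congr rfl fun i _ => Finset.sum_congr rfl fun j _ => by ring
  have hsymm : ⟪u, expCov K 0 s⟫ = ⟪s, expCov K 0 u⟫ := by
    rw [hK.inner_expCov, hK.inner_expCov]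
    simp only [mul_comm]
  have hw : ∀ x ∈ K, ∀ z ∈ K, ⟪s, x - z⟫ ≤ 1 := fun x hx z hz => hs _ (Set.sub_mem_sub hx hz)
  have hbK : centroid K ∈ K := hb ▸ hK.expMean_mem 0
  have hxb : ∀ x ∈ K, |⟪s, x - centroid K⟫| ≤ 1 := fun x hx => by
    refine abs_le.2 ⟨?_, hw x hx _ hbK⟩
    have := hw _ hbK x hx
    rw [← neg_sub, inner_neg_right] at this
    linarith
  have hss : ⟪s, expCov K 0 s⟫ ≤ 1 := by
    rw [hK.inner_expCov, hvK, hb, inv_mul_le_iff₀ hK.toReal_pos, mul_one]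
    calc _ ≤ ∫ x in K, (1 : ℝ) := by
          refine setIntegral_mono_on (hK.integrableOn (by fun_prop))
            (hK.integrableOn continuous_const) hK.2.1.measurableSet fun x hx => ?_
          have := hxb x hx
          rw [real_inner_comm] at this
          have h2 : ⟪x - centroid K, s⟫ ^ 2 ≤ 1 := (sq_le_one_iff_abs_le_one _).2 this
          simp only [inner_zero_left, Real.exp_zero, one_mul]
          nlinarith
      _ = _ := by simp [measureReal_def]
  -- Cauchy–Schwarz for the covariance form
  have hpos : ∀ v, 0 ≤ ⟪v, expCov K 0 v⟫ := fun v => by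
    by_cases hv : v = 0
    · simp [hv]
    · exact (hK.inner_expCov_pos 0 hv).le
  have h1 := hpos (s - u)
  have h2 := hpos (s + u)
  simp only [map_sub, map_add, inner_sub_left, inner_sub_right, inner_add_left, inner_add_right,
    hsymm, hAu] at h1 h2
  have hsy : |⟪s, y⟫| ≤ 1 := abs_le.2 ⟨by linarith, by linarith⟩
  have hsb : |⟪s, centroid K⟫| ≤ 1 := by
    rw [← hyc, inner_smul_right, abs_mul]
    have h0 : |((n : ℝ) + 1)⁻¹| ≤ 1 := by
      rw [abs_of_pos (by positivity)]
      exact inv_le_one_of_one_le₀ (by linarith [Nat.cast_nonneg (α := ℝ) n])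
    nlinarith [abs_nonneg ⟪s, y⟫, abs_nonneg ((n : ℝ) + 1)⁻¹]
  have := hxb x hx
  rw [inner_sub_right] at this
  rw [abs_le] at *
  constructor <;> linarith [this.1, this.2, hsb.1, hsb.2]

end expFamily

/-! ### Volumes of difference bodies and gauge integrals -/

lemma IsConvexBody.isCompact_sub {n : ℕ} {K : Set (Euc n)} (hK : IsConvexBody K) :
    IsCompact (K - K) := by
  rw [sub_eq_add_neg]
  exact hK.2.1.add hK.2.1.neg

/-- An elementary form of the Rogers–Shephard inequality. -/
lemma IsConvexBody.volume_sub_le {n : ℕ} {K : Set (Euc n)} (hK : IsConvexBody K) :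
    volume (K - K) ≤ 4 ^ n * volume K := by
  have hm := hK.2.1.measurableSet
  set q : ℝ≥0∞ := ENNReal.ofReal ((1 / 2) ^ n) with hq
  have hhalf : ∀ A : Set (Euc n), volume ((1 / 2 : ℝ) • A) = q * volume A := fun A => by
    rw [Measure.addHaar_smul, finrank_euclideanSpace_fin, abs_of_nonneg (by positivity)]
  have hlow : ∀ x ∈ (1 / 2 : ℝ) • (K - K), q * volume K ≤
      ∫⁻ y, K.indicator 1 y * K.indicator (fun _ => (1 : ℝ≥0∞)) (y - x) := by
    rintro _ ⟨_, ⟨k₁, hk₁, k₂, hk₂, rfl⟩, rfl⟩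
    set T : Set (Euc n) := (fun y => (1 / 2 : ℝ) • k₁ + y) '' ((1 / 2 : ℝ) • K) with hT
    have hvol : volume T = q * volume K := by
      rw [hT, Set.image_add_left, measure_preimage_add, hhalf]
    have hTm : MeasurableSet T := ((hK.2.1.smul _).image (by fun_prop)).measurableSet
    rw [← hvol, ← lintegral_indicator_one hTm]
    refine lintegral_mono fun y => ?_
    by_cases hy : y ∈ T
    · obtain ⟨_, ⟨z, hz, rfl⟩, rfl⟩ := hy
      have h1 : (1 / 2 : ℝ) • k₁ + (1 / 2 : ℝ) • z ∈ K :=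
        hK.1 hk₁ hz (by norm_num) (by norm_num) (by norm_num)
      have h2 : (1 / 2 : ℝ) • k₂ + (1 / 2 : ℝ) • z ∈ K :=
        hK.1 hk₂ hz (by norm_num) (by norm_num) (by norm_num)
      have e : (1 / 2 : ℝ) • k₁ + (1 / 2 : ℝ) • z - (1 / 2 : ℝ) • (k₁ - k₂) =
          (1 / 2 : ℝ) • k₂ + (1 / 2 : ℝ) • z := by module
      simp only [] at *
      rw [e, Set.indicator_of_mem h1, Set.indicator_of_mem h2, Pi.one_apply, one_mul]
      exact Set.indicator_le_self' (fun _ _ => zero_le_one) _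
    · simp [Set.indicator_of_notMem hy]
  have hmeas : Measurable fun p : Euc n × Euc n =>
      K.indicator 1 p.2 * K.indicator (fun _ => (1 : ℝ≥0∞)) (p.2 - p.1) :=
    ((measurable_one.indicator hm).comp measurable_snd).mul
      ((measurable_const.indicator hm).comp (measurable_snd.sub measurable_fst))
  have htot : ∫⁻ x, ∫⁻ y, K.indicator 1 y * K.indicator (fun _ => (1 : ℝ≥0∞)) (y - x) =
      volume K * volume K := by
    rw [lintegral_lintegral_swap hmeas.aemeasurable]
    have h1 : ∀ y : Euc n, ∫⁻ x, K.indicator 1 y * K.indicator (fun _ => (1 : ℝ≥0∞)) (y - x) =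
        K.indicator 1 y * volume K := by
      intro y
      have hmy : Measurable fun x => K.indicator (fun _ => (1 : ℝ≥0∞)) (y - x) :=
        (measurable_const.indicator hm).comp (measurable_const.sub measurable_id)
      rw [lintegral_const_mul _ hmy,
        lintegral_sub_left_eq_self (fun x => K.indicator (fun _ => (1 : ℝ≥0∞)) x) y,
        lintegral_indicator_const hm, one_mul]
    simp_rw [h1]
    rw [lintegral_mul_const _ (measurable_one.indicator hm), lintegral_indicator_one hm]
  have hH : MeasurableSet ((1 / 2 : ℝ) • (K - K)) := (hK.isCompact_sub.smul _).measurableSet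
  have h2 : q * volume K * (q * volume (K - K)) ≤ volume K * volume K := by
    rw [← htot, ← hhalf (K - K), ← setLIntegral_const]
    exact (setLIntegral_mono' hH hlow).trans (setLIntegral_le_lintegral _ _)
  have hqq : (4 : ℝ≥0∞) ^ n * (q * q) = 1 := by
    rw [hq, ← ENNReal.ofReal_mul (by positivity),
      show (4 : ℝ≥0∞) ^ n = ENNReal.ofReal (4 ^ n) by
        rw [ENNReal.ofReal_pow (by norm_num)]; simp, ← ENNReal.ofReal_mul (by positivity),
      ← mul_pow, ← mul_pow]
    norm_num
  have h3 : volume (K - K) * volume K ≤ 4 ^ n * volume K * volume K := by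
    calc _ = 4 ^ n * (q * q) * (volume (K - K) * volume K) := by rw [hqq, one_mul]
      _ = 4 ^ n * (q * volume K * (q * volume (K - K))) := by ring
      _ ≤ 4 ^ n * (volume K * volume K) := mul_le_mul_right h2 _
      _ = _ := by ring
  exact (ENNReal.mul_le_mul_iff_left hK.volume_pos.ne' hK.volume_ne_top).1 h3

/-- The layer-cake formula `∫ exp (-t * gauge A) = n! t^{-n} vol A`, of which only `≤` is needed. -/
lemma lintegral_exp_gauge_le {n : ℕ} {A : Set (Euc n)} (hc : Convex ℝ A) (h0 : A ∈ nhds 0)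
    (hsymm : ∀ x ∈ A, -x ∈ A) (hb : Bornology.IsBounded A) {t : ℝ} (ht : 0 < t) :
    ∫⁻ x, ENNReal.ofReal (Real.exp (-(t * gauge A x))) ≤
      ENNReal.ofReal (n.factorial / t ^ n) * volume A := by
  have habs : Absorbent ℝ A := absorbent_nhds_zero h0
  have hcont : Continuous (gauge A) := continuous_gauge hc h0
  have h := measure_lt_one_eq_integral_div_gamma (volume : Measure (Euc n))
    (g := fun x => t * gauge A x) (p := 1) (by simp [gauge_zero])
    (fun x => by rw [gauge_neg hsymm]) (fun x y => by
      rw [← mul_add]; exact mul_le_mul_of_nonneg_left (gauge_add_le hc habs x y) ht.le)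
    (fun {x} hx => by
      have : gauge A x = 0 := by simpa [ht.ne'] using hx
      exact (gauge_eq_zero habs ((NormedSpace.isVonNBounded_iff ℝ).2 hb)).1 this)
    (fun r x => by
      have : gauge A (r • x) = |r| * gauge A x := by
        rcases le_total 0 r with hr | hr
        · rw [gauge_smul_of_nonneg hr, abs_of_nonneg hr, smul_eq_mul]
        · rw [← gauge_neg hsymm, ← neg_smul, gauge_smul_of_nonneg (neg_nonneg.2 hr),
            abs_of_nonpos hr, smul_eq_mul]
      rw [this]; apply le_of_eq; ring) one_pos
  simp only [Real.rpow_one, div_one, finrank_euclideanSpace_fin] at h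
  rw [Real.Gamma_nat_eq_factorial] at h
  set I := ∫ x, Real.exp (-(t * gauge A x)) with hI
  have hsub : {x | t * gauge A x < 1} ⊆ t⁻¹ • A := by
    intro x hx
    rw [Set.mem_ofPred_eq, ← smul_eq_mul, ← gauge_smul_of_nonneg ht.le] at hx
    exact ⟨t • x, setOfPred_gauge_lt_one_subset_self hc (mem_of_mem_nhds h0) habs hx,
      by simp [smul_smul, ht.ne']⟩
  have hpos : 0 < volume {x | t * gauge A x < 1} :=
    (isOpen_lt (by fun_prop) continuous_const).measure_pos _ ⟨0, by simp [gauge_zero]⟩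
  have hI0 : I ≠ 0 := by
    intro h1
    simp [h, h1] at hpos
  have hintg : Integrable fun x => Real.exp (-(t * gauge A x)) :=
    not_imp_comm.1 integral_undef hI0
  have hf : (0 : ℝ) < n.factorial := by exact_mod_cast n.factorial_pos
  calc _ = ENNReal.ofReal I := (ofReal_integral_eq_lintegral_ofReal hintg
          (Filter.Eventually.of_forall fun x => (Real.exp_pos _).le)).symm
    _ = ENNReal.ofReal n.factorial * volume {x | t * gauge A x < 1} := by
        rw [h, ← ENNReal.ofReal_mul hf.le, mul_div_cancel₀ _ hf.ne']
    _ ≤ ENNReal.ofReal n.factorial * volume (t⁻¹ • A) := mul_le_mul_right (measure_mono hsub) _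
    _ = _ := by
        rw [Measure.addHaar_smul, finrank_euclideanSpace_fin, abs_of_nonneg (by positivity),
          ← mul_assoc, ← ENNReal.ofReal_mul hf.le, inv_pow, div_eq_mul_inv]

/-! ### The symmetrized gradient map of a convex body -/

lemma convex_polarBody {n : ℕ} (A : Set (Euc n)) : Convex ℝ (polarBody A) := by
  intro x hx y hy a b ha hb hab z hz
  rw [inner_add_left, real_inner_smul_left, real_inner_smul_left]
  nlinarith [hx z hz, hy z hz]

lemma isClosed_polarBody {n : ℕ} (A : Set (Euc n)) : IsClosed (polarBody A) := by
  have : polarBody A = ⋂ y ∈ A, {x : Euc n | ⟪x, y⟫ ≤ 1} := by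
    ext x; simp [polarBody]
  rw [this]
  exact isClosed_biInter fun y _ => isClosed_le (by fun_prop) continuous_const

lemma polarBody_mem_nhds {n : ℕ} {A : Set (Euc n)} (hA : Bornology.IsBounded A) :
    polarBody A ∈ nhds 0 := by
  obtain ⟨R, hR0, hR⟩ := hA.exists_pos_norm_le
  refine Metric.mem_nhds_iff.2 ⟨R⁻¹, by positivity, fun x hx y hy => ?_⟩
  rw [mem_ball_zero_iff] at hx
  refine (real_inner_le_norm x y).trans ?_
  refine (mul_le_mul hx.le (hR y hy) (norm_nonneg _) (by positivity)).trans ?_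
  rw [inv_mul_cancel₀ hR0.ne']

lemma isBounded_polarBody {n : ℕ} {A : Set (Euc n)} (hA : A ∈ nhds 0) :
    Bornology.IsBounded (polarBody A) := by
  obtain ⟨r, hr, hrA⟩ := Metric.nhds_basis_closedBall.mem_iff.1 hA
  refine isBounded_iff_forall_norm_le.2 ⟨r⁻¹, fun x hx => ?_⟩
  by_cases h0 : x = 0
  · simp [h0, hr.le]
  have hx0 : 0 < ‖x‖ := norm_pos_iff.2 h0
  have h1 := hx ((r / ‖x‖) • x) (hrA (by
    rw [mem_closedBall_zero_iff, norm_smul, Real.norm_of_nonneg (by positivity)]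
    field_simp; rfl))
  rw [inner_smul_right, real_inner_self_eq_norm_sq] at h1
  rw [← one_div, le_div_iff₀ hr]
  calc _ = r / ‖x‖ * ‖x‖ ^ 2 := by field_simp
    _ ≤ 1 := h1

/-- The gauge of the polar body is at most the support function. -/
lemma gauge_polarBody_le {n : ℕ} {A : Set (Euc n)} {x : Euc n} {W : ℝ} (hW : 0 ≤ W)
    (h : ∀ y ∈ A, ⟪x, y⟫ ≤ W) : gauge (polarBody A) x ≤ W := by
  refine le_of_forall_pos_le_add fun η hη => ?_
  have h1 : 0 < W + η := by positivity
  refine gauge_le_of_mem h1.le ⟨(W + η)⁻¹ • x, fun y hy => ?_, by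
    simp [smul_smul, h1.ne']⟩
  rw [real_inner_smul_left, inv_mul_le_iff₀ h1]
  linarith [h y hy]

section gradient

variable {n : ℕ} {K : Set (Euc n)}

lemma IsConvexBody.sub_mem_nhds (hK : IsConvexBody K) : K - K ∈ nhds 0 := by
  obtain ⟨z, hz⟩ := hK.2.2
  have h1 : IsOpen (interior K - {z}) := isOpen_interior.sub_right
  have h2 : interior K - {z} ⊆ K - K :=
    Set.sub_subset_sub interior_subset (Set.singleton_subset_iff.2 (interior_subset hz))
  exact Filter.mem_of_superset (h1.mem_nhds ⟨z, hz, z, rfl, sub_self z⟩) h2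

lemma neg_mem_sub_self {A : Set (Euc n)} : ∀ x ∈ A - A, -x ∈ A - A := by
  rintro _ ⟨a, ha, b, hb, rfl⟩
  exact ⟨b, hb, a, ha, by simp⟩

lemma neg_mem_polarBody_sub {A : Set (Euc n)} :
    ∀ x ∈ polarBody (A - A), -x ∈ polarBody (A - A) := by
  intro x hx y hy
  rw [inner_neg_left, ← inner_neg_right]
  exact hx _ (neg_mem_sub_self y hy)

/-- A bound on the covariance operator that is uniform in `s`, hence a Lipschitz constant for the
gradient map. -/
lemma IsConvexBody.norm_expCov_le (hK : IsConvexBody K) {R : ℝ} (hR : ∀ x ∈ K, ‖x‖ ≤ R)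
    (s : Euc n) : ‖expCov K s‖ ≤ (2 * R) ^ 2 := by
  refine ContinuousLinearMap.opNorm_le_bound _ (by positivity) fun v => ?_
  have hZ := hK.expInt_pos s
  have hb := hR _ (hK.expMean_mem s)
  have hR0 : 0 ≤ R := (norm_nonneg _).trans hb
  rw [hK.expCov_apply, norm_smul, Real.norm_of_nonneg (inv_nonneg.2 hZ.le),
    inv_mul_le_iff₀ hZ]
  calc _ ≤ ∫ x in K, Real.exp ⟪s, x⟫ * ((2 * R) ^ 2 * ‖v‖) := by
        refine norm_integral_le_of_norm_le (hK.integrableOn (by fun_prop)) ?_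
        refine (ae_restrict_iff' hK.2.1.measurableSet).2 (Filter.Eventually.of_forall fun x hx => ?_)
        rw [norm_smul, Real.norm_of_nonneg (Real.exp_pos _).le, norm_smul]
        refine mul_le_mul_of_nonneg_left ?_ (Real.exp_pos _).le
        have h1 : ‖x - expMean K s‖ ≤ 2 * R := (norm_sub_le _ _).trans (by linarith [hR x hx])
        have h2 := norm_inner_le_norm (𝕜 := ℝ) (x - expMean K s) v
        calc _ ≤ (2 * R * ‖v‖) * (2 * R) := mul_le_mul
                (h2.trans (mul_le_mul_of_nonneg_right h1 (norm_nonneg _))) h1 (norm_nonneg _)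
                (by positivity)
          _ = _ := by ring
    _ = _ := by rw [integral_mul_const]; rfl

/-- A strongly monotone perturbation of the odd part of `s ↦ expMean K s`. -/
def oddMean (K : Set (Euc n)) (κ : ℝ) (x : Euc n) : Euc n :=
  (1 / 2 : ℝ) • (expMean K x - expMean K (-x)) + κ • x

lemma IsConvexBody.isGoodMap_oddMean (hK : IsConvexBody K) {R : ℝ} (hR : ∀ x ∈ K, ‖x‖ ≤ R)
    {κ : ℝ} (hκ : 0 < κ) : IsGoodMap (oddMean K κ) κ ((2 * R) ^ 2 + κ) := by
  have hd : Differentiable ℝ (expMean K) := fun s => (hK.hasFDerivAt_expMean s).differentiableAt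
  have hL : ∀ x z, ‖expMean K x - expMean K z‖ ≤ (2 * R) ^ 2 * ‖x - z‖ := fun x z =>
    convex_univ.norm_image_sub_le_of_norm_hasFDerivWithin_le
      (fun s _ => (hK.hasFDerivAt_expMean s).hasFDerivWithinAt)
      (fun s _ => hK.norm_expCov_le hR s) (Set.mem_univ _) (Set.mem_univ _)
  have hm : ∀ x z, 0 ≤ ⟪expMean K x - expMean K z, x - z⟫ := fun x z => by
    by_cases h : x = z
    · simp [h]
    · exact (hK.inner_expMean_sub h).le
  have e : ∀ x z, oddMean K κ x - oddMean K κ z = (1 / 2 : ℝ) • (expMean K x - expMean K z) +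
      (1 / 2 : ℝ) • (expMean K (-z) - expMean K (-x)) + κ • (x - z) := fun x z => by
    unfold oddMean; module
  have hneg : ∀ x z : Euc n, -z - -x = x - z := fun x z => by abel
  refine ⟨hκ, ?_, fun x z => ?_, fun x z => ?_, by simp [oddMean]⟩
  · unfold oddMean
    fun_prop
  · rw [e, inner_add_left, inner_add_left, real_inner_smul_left, real_inner_smul_left,
      real_inner_smul_left, real_inner_self_eq_norm_sq]
    have h2 := hm (-z) (-x)
    rw [hneg] at h2
    linarith [hm x z]
  · rw [e]
    refine (norm_add₃_le).trans ?_
    rw [norm_smul, norm_smul, norm_smul, Real.norm_of_nonneg hκ.le, Real.norm_of_nonneg (by norm_num)]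
    have h2 := hL (-z) (-x)
    rw [hneg] at h2
    linarith [hL x z]

/-- The value of the gradient at `x` controls the maximum of `⟪x,·⟫` on `K`. -/
lemma IsConvexBody.exp_le_exp_inner_expMean (hK : IsConvexBody K) {x x₀ : Euc n} (hx₀ : x₀ ∈ K)
    {m : ℝ} (hm : ∀ y ∈ K, m ≤ ⟪x, y⟫) :
    3 / 4 * ⟪x, x₀⟫ + 1 / 4 * m ≤ n * Real.log 4 + ⟪x, expMean K x⟫ := by
  set c := ⟪x, expMean K x⟫ with hc
  have hv := hK.toReal_pos
  have h1 := hK.le_expInt hx₀ (δ := 1 / 4) (by norm_num) (by norm_num) hm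
  -- Jensen's inequality for `exp (-⟪x,·⟫)` and the tilted measure
  have h2 : Real.exp (-c) * expInt K x ≤ (volume K).toReal := by
    have e1 : ∫ y in K, Real.exp ⟪x, y⟫ * ⟪x, y⟫ = expInt K x * c := by
      rw [hc, expMean, inner_smul_right, mul_inv_cancel_left₀ (hK.expInt_pos x).ne',
        ← integral_inner (hK.integrableOn (by fun_prop))]
      simp [inner_smul_right]
    calc Real.exp (-c) * expInt K x
        = Real.exp (-c) * ∫ y in K, ((1 + c) * Real.exp ⟪x, y⟫ - Real.exp ⟪x, y⟫ * ⟪x, y⟫) := by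
          rw [integral_sub (hK.integrableOn (by fun_prop)) (hK.integrableOn (by fun_prop)), e1,
            integral_const_mul]
          change _ = _ * ((1 + c) * expInt K x - _)
          ring
      _ = ∫ y in K, Real.exp (-c) * ((1 + c) * Real.exp ⟪x, y⟫ - Real.exp ⟪x, y⟫ * ⟪x, y⟫) := by
          rw [integral_const_mul]
      _ ≤ ∫ y in K, (1 : ℝ) := by
          refine setIntegral_mono_on (hK.integrableOn (by fun_prop))
            (hK.integrableOn continuous_const) hK.2.1.measurableSet fun y _ => ?_
          have h3 := Real.add_one_le_exp (c - ⟪x, y⟫)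
          calc _ = Real.exp (-c) * Real.exp ⟪x, y⟫ * (c - ⟪x, y⟫ + 1) := by ring
            _ ≤ Real.exp (-c) * Real.exp ⟪x, y⟫ * Real.exp (c - ⟪x, y⟫) :=
                mul_le_mul_of_nonneg_left h3 (by positivity)
            _ = 1 := by
                rw [← Real.exp_add, ← Real.exp_add, Real.exp_eq_one_iff]; ring
      _ = _ := by simp [measureReal_def]
  have h3 : (1 / 4 : ℝ) ^ n * Real.exp ((1 - 1 / 4) * ⟪x, x₀⟫ + 1 / 4 * m) ≤ Real.exp c := by
    have h4 := mul_le_mul_of_nonneg_left h1 (Real.exp_pos (-c)).le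
    have h5 : Real.exp (-c) * ((1 / 4) ^ n * Real.exp ((1 - 1 / 4) * ⟪x, x₀⟫ + 1 / 4 * m)) ≤ 1 := by
      refine le_of_mul_le_mul_right ?_ hv
      rw [one_mul]
      refine le_trans (le_of_eq ?_) (h4.trans h2)
      ring
    rwa [Real.exp_neg, inv_mul_le_iff₀ (Real.exp_pos _), mul_one] at h5
  have h4 : (1 / 4 : ℝ) ^ n = Real.exp (-(n * Real.log 4)) := by
    rw [Real.exp_neg, Real.exp_nat_mul, Real.exp_log (by norm_num)]
    simp
  rw [h4, ← Real.exp_add, Real.exp_le_exp] at h3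
  linarith

end gradient

/-! ### The volume product -/

section volumeProduct

variable {n : ℕ} {K : Set (Euc n)}

/-- The gauge of `(K - K)*` at `x` is the width of `K` in the direction `x`. It is estimated by applying
`exp_le_exp_inner_expMean` to `x` and to `-x` and adding: the width appears with total coefficient
`3/4 - 1/4 = 1/2`. -/
lemma IsConvexBody.gauge_polar_le (hK : IsConvexBody K) (κ : ℝ) (x : Euc n) :
    gauge (polarBody (K - K)) x ≤
      4 * (⟪x, oddMean K κ x⟫ - κ * ‖x‖ ^ 2 + n * Real.log 4) := by
  have hne : K.Nonempty := hK.2.2.mono interior_subset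
  have hcont : ContinuousOn (fun y : Euc n => ⟪x, y⟫) K := by fun_prop
  obtain ⟨x₀, hx₀, hmax⟩ := hK.2.1.exists_isMaxOn hne hcont
  obtain ⟨x₁, hx₁, hmin⟩ := hK.2.1.exists_isMinOn hne hcont
  have hmax' : ∀ y ∈ K, ⟪x, y⟫ ≤ ⟪x, x₀⟫ := fun y hy => hmax hy
  have hmin' : ∀ y ∈ K, ⟪x, x₁⟫ ≤ ⟪x, y⟫ := fun y hy => hmin hy
  have h1 := hK.exp_le_exp_inner_expMean hx₀ hmin'
  have h2 := hK.exp_le_exp_inner_expMean (x := -x) (m := -⟪x, x₀⟫) hx₁ fun y hy => by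
    rw [inner_neg_left]; linarith [hmax' y hy]
  have h3 : gauge (polarBody (K - K)) x ≤ ⟪x, x₀⟫ - ⟪x, x₁⟫ := by
    refine gauge_polarBody_le (by linarith [hmin' _ hx₀]) ?_
    rintro _ ⟨a, ha, b, hb, rfl⟩
    simp only [inner_sub_right]
    linarith [hmax' a ha, hmin' b hb]
  rw [inner_neg_left, inner_neg_left] at h2
  have h4 : ⟪x, oddMean K κ x⟫ = 1 / 2 * (⟪x, expMean K x⟫ - ⟪x, expMean K (-x)⟫) +
      κ * ‖x‖ ^ 2 := by
    rw [oddMean, inner_add_right, inner_smul_right, inner_sub_right, inner_smul_right,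
      real_inner_self_eq_norm_sq]
  rw [h4]
  linarith

/-- Without the `κ`-terms, `oddMean x - oddMean z` is a point of `K - K`. The choice `κ = r² / (4n)`
makes `n` times the gauge exceed `2n` by at most `κ/2 * (|x|² + |z|²)`, which the `κ`-part of the
pairing absorbs. -/
lemma IsConvexBody.gauge_sub_le (hK : IsConvexBody K) (hn : n ≠ 0) {r : ℝ} (hr : 0 < r)
    (hball : Metric.ball 0 r ⊆ K - K) (x z : Euc n) :
    n * (gauge (K - K) (oddMean K (r ^ 2 / (4 * n)) x - oddMean K (r ^ 2 / (4 * n)) z) - 2) ≤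
      r ^ 2 / (4 * n) / 2 * (‖x‖ ^ 2 + ‖z‖ ^ 2) := by
  have hn' : (0 : ℝ) < n := by exact_mod_cast Nat.pos_of_ne_zero hn
  set κ : ℝ := r ^ 2 / (4 * n) with hκ
  have hκ0 : 0 < κ := by positivity
  have hhalf : ∀ a ∈ K, ∀ b ∈ K, (1 / 2 : ℝ) • a + (1 / 2 : ℝ) • b ∈ K := fun a ha b hb =>
    hK.1 ha hb (by norm_num) (by norm_num) (by norm_num)
  set b₀ : Euc n := ((1 / 2 : ℝ) • expMean K x + (1 / 2 : ℝ) • expMean K (-z)) -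
    ((1 / 2 : ℝ) • expMean K (-x) + (1 / 2 : ℝ) • expMean K z) with hb₀
  have hb : b₀ ∈ K - K := Set.sub_mem_sub
    (hhalf _ (hK.expMean_mem _) _ (hK.expMean_mem _))
    (hhalf _ (hK.expMean_mem _) _ (hK.expMean_mem _))
  have e : oddMean K κ x - oddMean K κ z = b₀ + κ • (x - z) := by
    unfold oddMean; module
  have hconv : Convex ℝ (K - K) := hK.1.sub hK.1
  have h1 : gauge (K - K) (oddMean K κ x - oddMean K κ z) ≤ 1 + κ * (‖x - z‖ / r) := by
    rw [e]
    refine (gauge_add_le hconv (absorbent_nhds_zero hK.sub_mem_nhds) _ _).trans ?_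
    refine add_le_add (gauge_le_one_of_mem hb) ?_
    rw [gauge_smul_of_nonneg hκ0.le, smul_eq_mul]
    refine mul_le_mul_of_nonneg_left ?_ hκ0.le
    rw [le_div_iff₀ hr, mul_comm]
    exact mul_gauge_le_norm hball
  set t := κ * (‖x - z‖ / r) with ht
  have h2 : ‖x - z‖ ^ 2 ≤ 2 * (‖x‖ ^ 2 + ‖z‖ ^ 2) := by
    rw [norm_sub_sq_real]
    have := (neg_le_abs _).trans (abs_inner_le_half x z)
    linarith
  have h3 : n * t ^ 2 = κ / 4 * ‖x - z‖ ^ 2 := by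
    rw [ht, hκ]; field_simp
  have h4 : t - 1 ≤ t ^ 2 := by nlinarith [sq_nonneg (t - 1 / 2)]
  calc _ ≤ n * t ^ 2 := mul_le_mul_of_nonneg_left (by linarith) hn'.le
    _ ≤ _ := by rw [h3]; nlinarith

/-- The integrand of the monotone-map inequality is dominated by a product of functions of the two
components of `shearMap (oddMean K κ) 1 1 p`. -/
lemma IsConvexBody.exp_graphPairing_le (hK : IsConvexBody K) (hn : n ≠ 0) {r : ℝ} (hr : 0 < r)
    (hball : Metric.ball 0 r ⊆ K - K) (p : Euc n × Euc n) :
    Real.exp (-(graphPairing (oddMean K (r ^ 2 / (4 * n))) p / 2)) ≤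
      4 ^ n * Real.exp 2 ^ n * (Real.exp (-(1 / 8 * gauge (polarBody (K - K)) (p.1 + p.2))) *
        Real.exp (-(n * gauge (K - K) (oddMean K (r ^ 2 / (4 * n)) p.1 -
          oddMean K (r ^ 2 / (4 * n)) p.2)))) := by
  set κ : ℝ := r ^ 2 / (4 * n) with hκ
  have h1 := hK.gauge_polar_le κ p.1
  have h2 := hK.gauge_polar_le κ p.2
  have h3 := hK.gauge_sub_le hn hr hball p.1 p.2
  have h4 := gauge_add_le (convex_polarBody (K - K)) (absorbent_nhds_zero
    (polarBody_mem_nhds hK.isCompact_sub.isBounded)) p.1 p.2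
  have e : (4 : ℝ) ^ n = Real.exp (n * Real.log 4) := by
    rw [Real.exp_nat_mul, Real.exp_log (by norm_num)]
  rw [e, ← Real.exp_nat_mul, ← Real.exp_add, ← Real.exp_add, ← Real.exp_add, Real.exp_le_exp]
  rw [← hκ] at h3
  unfold graphPairing
  linarith

/-- A lower bound for the product of the volumes of `K` and of the polar body of `K - K`. -/
theorem IsConvexBody.one_le_volume_product (hK : IsConvexBody K) (hn : n ≠ 0) :
    1 ≤ ENNReal.ofReal ((128 * Real.exp 2 * n) ^ n) * volume (polarBody (K - K)) * volume K := by
  have hn' : (0 : ℝ) < n := by exact_mod_cast Nat.pos_of_ne_zero hn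
  obtain ⟨r, hr, hball⟩ := Metric.mem_nhds_iff.1 hK.sub_mem_nhds
  obtain ⟨R, hR⟩ := hK.2.1.isBounded.exists_norm_le
  set κ : ℝ := r ^ 2 / (4 * n) with hκ
  have hκ0 : 0 < κ := by positivity
  set P := polarBody (K - K) with hP
  have hPn : P ∈ nhds 0 := polarBody_mem_nhds hK.isCompact_sub.isBounded
  have hPc : Convex ℝ P := convex_polarBody _
  have hDc : Convex ℝ (K - K) := hK.1.sub hK.1
  have hgP : Continuous (gauge P) := continuous_gauge hPc hPn
  have hgD : Continuous (gauge (K - K)) := continuous_gauge hDc hK.sub_mem_nhds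
  set F : Euc n → ℝ≥0∞ := fun a => ENNReal.ofReal (Real.exp (-(1 / 8 * gauge P a))) with hF
  set H : Euc n → ℝ≥0∞ := fun b => ENNReal.ofReal (Real.exp (-(n * gauge (K - K) b))) with hH
  have hFm : Measurable F := by
    have : Continuous fun a => Real.exp (-(1 / 8 * gauge P a)) := by fun_prop
    exact this.measurable.ennreal_ofReal
  have hHm : Measurable H := by
    have : Continuous fun b => Real.exp (-(n * gauge (K - K) b)) := by fun_prop
    exact this.measurable.ennreal_ofReal
  have key := (hK.isGoodMap_oddMean hR hκ0).one_le_lintegral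
    (fun q => ENNReal.ofReal (4 ^ n * Real.exp 2 ^ n) * (F q.1 * H q.2)) fun p => by
      simp only [hF, hH, shearMap, one_smul]
      rw [← ENNReal.ofReal_mul (Real.exp_pos _).le, ← ENNReal.ofReal_mul (by positivity)]
      exact ENNReal.ofReal_le_ofReal (hK.exp_graphPairing_le hn hr hball p)
  have hFi := lintegral_exp_gauge_le hPc hPn neg_mem_polarBody_sub
    (isBounded_polarBody hK.sub_mem_nhds) (t := 1 / 8) (by norm_num)
  have hHi := lintegral_exp_gauge_le hDc hK.sub_mem_nhds neg_mem_sub_self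
    hK.isCompact_sub.isBounded hn'
  have hfac : (n.factorial : ℝ) ≤ n ^ n := by exact_mod_cast n.factorial_le_pow
  rw [lintegral_const_mul' _ _ ENNReal.ofReal_ne_top, Measure.volume_eq_prod,
    lintegral_prod_mul hFm.aemeasurable hHm.aemeasurable] at key
  calc 1 ≤ _ := key
    _ ≤ ENNReal.ofReal (4 ^ n * Real.exp 2 ^ n) *
        ((ENNReal.ofReal (n.factorial / (1 / 8) ^ n) * volume P) *
          (ENNReal.ofReal (n.factorial / n ^ n) * (ENNReal.ofReal (4 ^ n) * volume K))) := by
        refine mul_le_mul_right (mul_le_mul' hFi (hHi.trans (mul_le_mul_right ?_ _))) _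
        refine hK.volume_sub_le.trans_eq ?_
        rw [ENNReal.ofReal_pow (by norm_num)]; simp
    _ = ENNReal.ofReal (4 ^ n * Real.exp 2 ^ n * (n.factorial / (1 / 8) ^ n) *
          (n.factorial / n ^ n) * 4 ^ n) * volume P * volume K := by
        have e : ENNReal.ofReal (4 ^ n * Real.exp 2 ^ n * (n.factorial / (1 / 8) ^ n) *
            (n.factorial / n ^ n) * 4 ^ n) = ENNReal.ofReal (4 ^ n * Real.exp 2 ^ n) *
              ENNReal.ofReal (n.factorial / (1 / 8) ^ n) *
              ENNReal.ofReal (n.factorial / n ^ n) * ENNReal.ofReal (4 ^ n) := by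
          rw [← ENNReal.ofReal_mul (by positivity), ← ENNReal.ofReal_mul (by positivity),
            ← ENNReal.ofReal_mul (by positivity)]
        rw [e]
        ring
    _ ≤ _ := by
        gcongr
        have e : (128 * Real.exp 2 * n) ^ n = 4 ^ n * Real.exp 2 ^ n * (n ^ n / (1 / 8) ^ n) *
            (n ^ n / n ^ n) * (4 : ℝ) ^ n := by
          have : (n : ℝ) ^ n ≠ 0 := by positivity
          rw [div_self this, ← div_pow, ← mul_pow, ← mul_pow, mul_one, ← mul_pow]
          congr 1; ring
        rw [e]
        gcongr

end volumeProduct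

/-! ### Conclusion -/

/-- The centroid condition enters here: up to the factor `1/2`, the polar body of the difference body
is contained in the polar body of `conv(K ∪ -K)`. -/
lemma two_inv_smul_polarBody_subset {n : ℕ} {K : Set (Euc n)} (hK : IsConvexBody K)
    (hc : centroid K ∈ ((n : ℝ) + 1)⁻¹ • inertialEllipsoid K) :
    (1 / 2 : ℝ) • polarBody (K - K) ⊆ polarBody (convexHull ℝ (K ∪ -K)) := by
  rintro _ ⟨s, hs, rfl⟩ y hy
  have hsub : K ∪ -K ⊆ {y : Euc n | ⟪(1 / 2 : ℝ) • s, y⟫ ≤ 1} := by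
    have key : ∀ y ∈ K, |⟪s, y⟫| ≤ 2 := fun y hy => hK.abs_inner_le_two hc hs hy
    rintro y (hy | hy)
    · have := (abs_le.1 (key y hy)).2
      rw [Set.mem_ofPred_eq, real_inner_smul_left]
      linarith
    · have := (abs_le.1 (key (-y) hy)).1
      rw [inner_neg_right] at this
      rw [Set.mem_ofPred_eq, real_inner_smul_left]
      linarith
  have hconv : Convex ℝ {y : Euc n | ⟪(1 / 2 : ℝ) • s, y⟫ ≤ 1} :=
    convex_halfSpace_le (innerSL ℝ ((1 / 2 : ℝ) • s)).isLinear _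
  exact convexHull_min hsub hconv hy

theorem average_isotropic_constant_of_reweightings_bounded :
    ∃ C > (0 : ℝ), ∃ n₀ : ℕ, ∀ n ≥ n₀, ∀ ε > (0 : ℝ), ∀ K : Set (Euc n),
      IsConvexBody K →
      centroid K ∈ ((n : ℝ) + 1)⁻¹ • inertialEllipsoid K →
      (volume ((ε * n) • polarBody (convexHull ℝ (K ∪ -K)))).toReal⁻¹ *
          ∫ s in (ε * n) • polarBody (convexHull ℝ (K ∪ -K)),
            isotropicConstant (expWeight K s) ^ (2 * n) ≤
        (C * Real.exp ε / Real.sqrt ε) ^ (2 * n) := by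
  refine ⟨100, by norm_num, 1, fun n hn ε hε K hK hc => ?_⟩
  have hn0 : n ≠ 0 := by omega
  have hn' : (0 : ℝ) < n := by exact_mod_cast Nat.pos_of_ne_zero hn0
  have hεn : 0 < ε * n := by positivity
  set L := polarBody (convexHull ℝ (K ∪ -K)) with hL
  set S := (ε * n) • L with hS
  have hSm : MeasurableSet S :=
    ((isClosed_polarBody _).smul₀ _).measurableSet
  have hmem : ∀ y ∈ K, y ∈ convexHull ℝ (K ∪ -K) ∧ -y ∈ convexHull ℝ (K ∪ -K) := fun y hy =>
    ⟨subset_convexHull ℝ _ (Or.inl hy), subset_convexHull ℝ _ (Or.inr (by simpa using hy))⟩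
  have hbound : ∀ s ∈ S, ∀ x ∈ K, |⟪s, x⟫| ≤ ε * n := by
    rintro _ ⟨s, hs, rfl⟩ x hx
    have h1 := hs _ (hmem x hx).1
    have h2 := hs _ (hmem x hx).2
    rw [inner_neg_right] at h2
    simp only [real_inner_smul_left, abs_mul, abs_of_pos hεn]
    have : |⟪s, x⟫| ≤ 1 := abs_le.2 ⟨by linarith, h1⟩
    nlinarith
  have hI := hK.integral_isotropicConstant_le hn0 hSm hbound
  by_cases htop : volume S = ⊤
  -- here the left-hand side is zero, because `⊤.toReal = 0`
  · rw [htop]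
    simp only [ENNReal.toReal_top, inv_zero, zero_mul]
    positivity
  -- lower bound for `vol S * vol K` from the volume product
  have hLP : ENNReal.ofReal ((1 / 2) ^ n) * volume (polarBody (K - K)) ≤ volume L := by
    have := measure_mono (μ := volume) (two_inv_smul_polarBody_subset hK hc)
    rwa [Measure.addHaar_smul, finrank_euclideanSpace_fin, abs_of_nonneg (by positivity)] at this
  have hvS : volume S = ENNReal.ofReal ((ε * n) ^ n) * volume L := by
    rw [hS, Measure.addHaar_smul, finrank_euclideanSpace_fin, abs_of_nonneg (by positivity)]
  have hE : ENNReal.ofReal (ε ^ n) ≤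
      ENNReal.ofReal ((256 * Real.exp 2) ^ n) * (volume S * volume K) := by
    calc _ ≤ ENNReal.ofReal (ε ^ n) * (ENNReal.ofReal ((128 * Real.exp 2 * n) ^ n) *
          volume (polarBody (K - K)) * volume K) :=
            le_mul_of_one_le_right' (hK.one_le_volume_product hn0)
      _ = ENNReal.ofReal ((256 * Real.exp 2) ^ n) * (ENNReal.ofReal ((ε * n) ^ n) *
          (ENNReal.ofReal ((1 / 2) ^ n) * volume (polarBody (K - K))) * volume K) := by
          have e : ENNReal.ofReal (ε ^ n) * ENNReal.ofReal ((128 * Real.exp 2 * n) ^ n) =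
              ENNReal.ofReal ((256 * Real.exp 2) ^ n) * ENNReal.ofReal ((ε * n) ^ n) *
                ENNReal.ofReal ((1 / 2) ^ n) := by
            rw [← ENNReal.ofReal_mul (by positivity), ← ENNReal.ofReal_mul (by positivity),
              ← ENNReal.ofReal_mul (by positivity), ← mul_pow, ← mul_pow, ← mul_pow]
            congr 2; ring
          calc _ = (ENNReal.ofReal (ε ^ n) * ENNReal.ofReal ((128 * Real.exp 2 * n) ^ n)) *
                volume (polarBody (K - K)) * volume K := by ring
            _ = _ := by rw [e]; ring
      _ ≤ _ := by
          rw [hvS]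
          gcongr
  have hV : ε ^ n ≤ (256 * Real.exp 2) ^ n * ((volume S).toReal * (volume K).toReal) := by
    have h := ENNReal.toReal_mono (by finiteness [hK.volume_ne_top]) hE
    rwa [ENNReal.toReal_ofReal (by positivity), ENNReal.toReal_mul, ENNReal.toReal_mul,
      ENNReal.toReal_ofReal (by positivity)] at h
  have hv := hK.toReal_pos
  have hSpos : 0 < (volume S).toReal := by
    refine lt_of_le_of_ne ENNReal.toReal_nonneg fun h0 => ?_
    rw [← h0, zero_mul, mul_zero] at hV
    exact absurd hV (not_le.2 (by positivity))
  have hfinal : (4 ^ n * Real.exp (2 * (ε * n))) * (256 * Real.exp 2) ^ n ≤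
      (100 * Real.exp ε) ^ (2 * n) := by
    have e1 : Real.exp (2 * (ε * n)) = (Real.exp ε ^ 2) ^ n := by
      rw [← Real.exp_nat_mul, ← Real.exp_nat_mul]; congr 1; push_cast; ring
    have e2 : Real.exp 2 ≤ 9 := by
      have : Real.exp 2 = Real.exp 1 ^ 2 := by rw [← Real.exp_nat_mul]; norm_num
      rw [this]
      nlinarith [Real.exp_one_lt_d9, Real.exp_pos 1]
    rw [e1, ← mul_pow, ← mul_pow, pow_mul]
    refine pow_le_pow_left₀ (by positivity) ?_ n
    nlinarith [sq_nonneg (Real.exp ε)]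
  have hsq : Real.sqrt ε ^ (2 * n) = ε ^ n := by
    rw [pow_mul, Real.sq_sqrt hε.le]
  rw [div_pow, hsq, le_div_iff₀ (by positivity)]
  calc _ ≤ (volume S).toReal⁻¹ * (4 ^ n * Real.exp (2 * (ε * n)) / (volume K).toReal) *
        ((256 * Real.exp 2) ^ n * ((volume S).toReal * (volume K).toReal)) :=
          mul_le_mul (mul_le_mul_of_nonneg_left hI (by positivity)) hV (by positivity)
            (by positivity)
    _ = (4 ^ n * Real.exp (2 * (ε * n))) * (256 * Real.exp 2) ^ n := by
        field_simp
    _ ≤ _ := hfinal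

end
end
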